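/- Schur polynomials as spherical integrals: for every positive integer N there exists a constant c_N > 0, depending only on N, such that for every Young diagram λ with at most N rows (with l_i = λ_i + N − i) and all pairwise distinct positive reals m_1,…,m_N, s_λ(m_1,…,m_N) = c_N · I_N(diag(log m_1,…,log m_N), diag(l_1/N,…,l_N/N)) · ∏_{1≤i<j≤N}((l_i − l_j)/N) · ∏_{1≤i<j≤N}(log m_i − log m_j) / ∏_{1≤i<j≤N}(m_i − m_j). -/

import Mathlib

/-- A semistandard Young tableau of shape `lam` (a Young diagram with at most `N` rows,
given as a nonincreasing function `Fin N → ℕ`), with entries in `Fin N` (representing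
the integers `1, …, N`).  `entry i j` is the entry in row `i` and column `j` (0-indexed);
rows are weakly increasing, columns are strictly increasing, and entries outside of the
shape are normalized to `0`. -/
structure SSYT (N : ℕ) (lam : Fin N → ℕ) where
  entry : Fin N → ℕ → Fin N
  rowWeak : ∀ (i : Fin N) (j1 j2 : ℕ), j1 ≤ j2 → j2 < lam i → entry i j1 ≤ entry i j2
  colStrict : ∀ (i1 i2 : Fin N), i1 < i2 → ∀ j : ℕ, j < lam i2 → entry i1 j < entry i2 j
  zeroOutside : ∀ (i : Fin N) (j : ℕ), lam i ≤ j → (entry i j : ℕ) = 0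

/-- The content of a semistandard Young tableau: `content T k` is the number of cells of
`T` whose entry equals `k`. -/
noncomputable def SSYT.content {N : ℕ} {lam : Fin N → ℕ} (T : SSYT N lam) (k : Fin N) : ℕ :=
  ∑ i : Fin N, ((Finset.range (lam i)).filter (fun j => T.entry i j = k)).card

/-- The Schur polynomial `s_lam (x 0, …, x (N-1))`, defined as the sum over all semistandard
Young tableaux `T` of shape `lam` with entries in `{1, …, N}` of the monomial
`∏ k, (x k) ^ (number of entries of T equal to k)`. -/
noncomputable def schur {R : Type*} [CommRing R] [TopologicalSpace R] (N : ℕ)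
    (lam : Fin N → ℕ) (x : Fin N → R) : R :=
  ∑' T : SSYT N lam, ∏ k : Fin N, x k ^ T.content k

/-- Matrices are endowed with the Borel sigma-algebra of their (entrywise) topology. -/
noncomputable instance matrixMeasurableSpace {m n α : Type*} [TopologicalSpace α] :
    MeasurableSpace (Matrix m n α) := borel _

/-- The spherical integral `I_N(C, D) = ∫_{U(N)} exp (N • tr (U C U⋆ D)) dμ(U)`,
with respect to a measure `μ` on the unitary group (real part is taken; for the
matrices considered here the trace is real). -/
noncomputable def sphInt (N : ℕ) (μ : MeasureTheory.Measure (Matrix.unitaryGroup (Fin N) ℂ))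
    (C D : Matrix (Fin N) (Fin N) ℂ) : ℝ :=
  ∫ U, Real.exp ((N : ℝ) * (Matrix.trace ((U : Matrix (Fin N) (Fin N) ℂ) * C *
    star (U : Matrix (Fin N) (Fin N) ℂ) * D)).re) ∂μ

open MeasureTheory

/-!
Schur side: removing the maximal entries of a tableau leaves a tableau whose shape interlaces with
the original one. Column operations give the alternant `det (x i ^ l j)` the same recursion, so
that `s_λ · ∏_{i<j} (x i - x j) = det (x i ^ l j)` by induction on the number of variables.

Spherical side: averaging over the unitary orbit of `diag b` kills all derivatives along
conjugations. For any functional `Φ` on polynomials in the matrix entries with this property,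
Harish-Chandra's argument computes the radial part of `tr ∂ᵏ`: on `q ↦ Φ (Δ(∂) q)`, with `q` a
polynomial in the diagonal entries, it acts as the power sum `∑ ∂ᵢᵏ`. For `k = 2` the dual
statement, about multiplication by `tr X²`, is a direct computation, and iterated commutators with
`tr X²` pass from multiplication by `tr Xᵏ` to `tr ∂ᵏ`.
-/

section Tableaux

open Finset

variable {N : ℕ}

theorem prod_prod_Ioi_castSucc {M : Type*} [CommMonoid M] (f : Fin (N + 1) → Fin (N + 1) → M) :
    ∏ i, ∏ j ∈ Ioi i, f i j =
      (∏ i : Fin N, ∏ j ∈ Ioi i, f i.castSucc j.castSucc) *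
        ∏ i : Fin N, f i.castSucc (Fin.last N) := by
  have Ioi_castSucc (i : Fin N) :
      Ioi i.castSucc = insert (Fin.last N) ((Ioi i).map Fin.castSuccEmb) := by
    rw [Fin.map_castSuccEmb_Ioi, Ioo_insert_right (Fin.castSucc_lt_last i), ← Fin.top_eq_last,
      Ioc_top]
  have Ioi_last : Ioi (Fin.last N) = ∅ := by rw [← Fin.top_eq_last, Ioi_top]
  rw [Fin.prod_univ_castSucc, Ioi_last, prod_empty, mul_one, ← prod_mul_distrib]
  refine prod_congr rfl fun i _ ↦ ?_
  rw [Ioi_castSucc, prod_insert (by simp), prod_map, mul_comm]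
  rfl

namespace SSYT

theorem ext {lam : Fin N → ℕ} {T T' : SSYT N lam}
    (h : ∀ i, ∀ j < lam i, T.entry i j = T'.entry i j) : T = T' := by
  suffices T.entry = T'.entry by
    cases T
    cases T'
    congr
  funext i j
  rcases lt_or_ge j (lam i) with hj | hj
  · exact h i j hj
  · exact Fin.ext ((T.zeroOutside i j hj).trans (T'.zeroOutside i j hj).symm)

noncomputable instance {lam : Fin N → ℕ} : Fintype (SSYT N lam) :=
  have : Finite (SSYT N lam) :=
    Finite.of_injective (fun T (c : Σ i, Fin (lam i)) ↦ T.entry c.1 c.2) fun _ _ h ↦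
      SSYT.ext fun i j hj ↦ congr_fun h ⟨i, j, hj⟩
  Fintype.ofFinite _

theorem prod_pow_content {R : Type*} [CommMonoid R] {lam : Fin N → ℕ} (T : SSYT N lam)
    (x : Fin N → R) :
    ∏ k, x k ^ T.content k = ∏ i, ∏ j ∈ range (lam i), x (T.entry i j) := by
  simp_rw [content, ← prod_pow_eq_pow_sum]
  rw [prod_comm]
  refine prod_congr rfl fun i _ ↦ ?_
  rw [← prod_fiberwise (range (lam i)) (T.entry i)]
  refine prod_congr rfl fun k _ ↦ ?_
  rw [prod_congr rfl fun j hj ↦ congr_arg x (mem_filter.1 hj).2, prod_const]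

theorem entry_last {lam : Fin (N + 1) → ℕ} (hlam : Antitone lam) (T : SSYT (N + 1) lam) {j : ℕ}
    (hj : j < lam (Fin.last N)) : T.entry (Fin.last N) j = Fin.last N := by
  have strict : StrictMono fun i ↦ T.entry i j := fun i₁ i₂ h ↦
    T.colStrict i₁ i₂ h j (hj.trans_le (hlam (Fin.le_last i₂)))
  exact (Fin.le_last _).antisymm (strict.le_apply (x := Fin.last N))

/-- The Young diagrams `μ` with `N` rows interlacing with `lam`, i.e. with
`lam (i + 1) ≤ μ i ≤ lam i`: the possible shapes of the part of a tableau of shape `lam` with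
`N + 1` rows that is occupied by the non-maximal entries. -/
def interlacing (lam : Fin (N + 1) → ℕ) : Finset (Fin N → ℕ) :=
  Icc (fun i ↦ lam i.succ) fun i ↦ lam i.castSucc

theorem mem_interlacing {lam : Fin (N + 1) → ℕ} {μ : Fin N → ℕ} :
    μ ∈ interlacing lam ↔ ∀ i, lam i.succ ≤ μ i ∧ μ i ≤ lam i.castSucc := by
  simp [interlacing, Pi.le_def, forall_and]

theorem antitone_of_mem_interlacing {lam : Fin (N + 1) → ℕ} (hlam : Antitone lam) {μ : Fin N → ℕ}
    (hμ : μ ∈ interlacing lam) : Antitone μ := by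
  intro i k hik
  rcases hik.eq_or_lt with rfl | hik
  · rfl
  · exact ((mem_interlacing.1 hμ k).2.trans (hlam (Fin.succ_le_castSucc_iff.2 hik))).trans
      (mem_interlacing.1 hμ i).1

/-- The entries of the tableau obtained from a tableau `S` of shape `μ` by filling the rest of
the larger shape `lam` with a new maximal entry. -/
def extendEntry (lam : Fin (N + 1) → ℕ) {μ : Fin N → ℕ} (S : SSYT N μ) (i : Fin (N + 1)) (j : ℕ) :
    Fin (N + 1) :=
  if j < lam i then
    Fin.lastCases (Fin.last N)
      (fun i ↦ if j < μ i then (S.entry i j).castSucc else Fin.last N) i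
  else 0

theorem extendEntry_last {lam : Fin (N + 1) → ℕ} {μ : Fin N → ℕ} (S : SSYT N μ) {j : ℕ}
    (hj : j < lam (Fin.last N)) : extendEntry lam S (Fin.last N) j = Fin.last N := by
  simp [extendEntry, hj]

theorem extendEntry_castSucc {lam : Fin (N + 1) → ℕ} {μ : Fin N → ℕ} (S : SSYT N μ) {i : Fin N}
    {j : ℕ} (hj : j < lam i.castSucc) :
    extendEntry lam S i.castSucc j = if j < μ i then (S.entry i j).castSucc else Fin.last N := by
  simp [extendEntry, hj]

/-- The tableau of shape `lam` obtained from a tableau of interlacing shape by filling the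
remaining cells with the maximal entry. -/
def extend {lam : Fin (N + 1) → ℕ} (hlam : Antitone lam)
    (S : Σ μ : interlacing lam, SSYT N (μ : Fin N → ℕ)) : SSYT (N + 1) lam where
  entry := extendEntry lam S.2
  rowWeak i j₁ j₂ hj hj₂ := by
    induction i using Fin.lastCases with
    | last => rw [extendEntry_last _ hj₂]; exact Fin.le_last _
    | cast i =>
      rw [extendEntry_castSucc _ (hj.trans_lt hj₂), extendEntry_castSucc _ hj₂]
      split_ifs with h₁ h₂ h₂
      · exact Fin.castSucc_le_castSucc_iff.2 (S.2.rowWeak i j₁ j₂ hj h₂)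
      · exact Fin.le_last _
      · exact absurd (hj.trans_lt h₂) h₁
      · rfl
  colStrict i₁ i₂ hi j hj := by
    obtain ⟨i₁, rfl⟩ := Fin.exists_castSucc_eq.2 (hi.trans_le (Fin.le_last i₂)).ne
    have hμ := mem_interlacing.1 S.1.2 i₁
    have hj₁ : j < S.1.1 i₁ :=
      (hj.trans_le (hlam (Fin.castSucc_lt_iff_succ_le.1 hi))).trans_le hμ.1
    rw [extendEntry_castSucc _ (hj₁.trans_le hμ.2), if_pos hj₁]
    induction i₂ using Fin.lastCases with
    | last => rw [extendEntry_last _ hj]; exact Fin.castSucc_lt_last _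
    | cast i₂ =>
      rw [extendEntry_castSucc _ hj]
      split_ifs with hj₂
      · exact Fin.castSucc_lt_castSucc_iff.2
          (S.2.colStrict i₁ i₂ (Fin.castSucc_lt_castSucc_iff.1 hi) j hj₂)
      · exact Fin.castSucc_lt_last _
  zeroOutside i j hj := by simp [extendEntry, hj.not_gt]

theorem lt_shape_iff_extendEntry_ne_last {lam : Fin (N + 1) → ℕ} {μ : Fin N → ℕ}
    (hμ : μ ∈ interlacing lam) (S : SSYT N μ) (i : Fin N) (j : ℕ) :
    j < μ i ↔ j < lam i.castSucc ∧ extendEntry lam S i.castSucc j ≠ Fin.last N := by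
  constructor
  · intro hj
    have hj' := hj.trans_le (mem_interlacing.1 hμ i).2
    rw [extendEntry_castSucc S hj', if_pos hj]
    exact ⟨hj', Fin.castSucc_ne_last _⟩
  · rintro ⟨hj, hne⟩
    by_contra h
    exact hne (by rw [extendEntry_castSucc S hj, if_neg h])

theorem extend_injective {lam : Fin (N + 1) → ℕ} (hlam : Antitone lam) :
    Function.Injective (extend hlam) := by
  rintro ⟨⟨μ, hμ⟩, S⟩ ⟨⟨ν, hν⟩, S'⟩ h
  have entry_eq (i j) : extendEntry lam S i j = extendEntry lam S' i j :=
    congr_fun₂ (congr_arg entry h) i j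
  obtain rfl : μ = ν := by
    funext i
    refine eq_of_forall_lt_iff fun j ↦ ?_
    rw [lt_shape_iff_extendEntry_ne_last hμ S, lt_shape_iff_extendEntry_ne_last hν S', entry_eq]
  obtain rfl : S = S' := by
    refine SSYT.ext fun i j hj ↦ ?_
    have hj' := hj.trans_le (mem_interlacing.1 hμ i).2
    have := entry_eq i.castSucc j
    rwa [extendEntry_castSucc S hj', extendEntry_castSucc S' hj', if_pos hj, if_pos hj,
      Fin.castSucc_inj] at this
  rfl

theorem exists_lt_innerShape_iff {lam : Fin (N + 1) → ℕ} (T : SSYT (N + 1) lam) :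
    ∃ μ : Fin N → ℕ, ∀ i j,
      j < μ i ↔ j < lam i.castSucc ∧ T.entry i.castSucc j ≠ Fin.last N := by
  classical
  have ex (i : Fin N) : ∃ j, lam i.castSucc ≤ j ∨ T.entry i.castSucc j = Fin.last N :=
    ⟨_, Or.inl le_rfl⟩
  refine ⟨fun i ↦ Nat.find (ex i), fun i j ↦ ?_⟩
  simp only [Nat.lt_find_iff, not_or, not_le]
  refine ⟨fun h ↦ h j le_rfl, fun ⟨hj, hne⟩ k hk ↦ ⟨hk.trans_lt hj, fun hlast ↦ hne ?_⟩⟩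
  exact (Fin.le_last _).antisymm (hlast ▸ T.rowWeak _ k j hk hj)

theorem extend_surjective {lam : Fin (N + 1) → ℕ} (hlam : Antitone lam) :
    Function.Surjective (extend hlam) := by
  intro T
  obtain ⟨μ, lt_μ_iff⟩ := T.exists_lt_innerShape_iff
  have ne_last {i j} (hj : j < μ i) : T.entry i.castSucc j ≠ Fin.last N := ((lt_μ_iff i j).1 hj).2
  have lt_lam {i j} (hj : j < μ i) : j < lam i.castSucc := ((lt_μ_iff i j).1 hj).1
  have hμ : μ ∈ interlacing lam := mem_interlacing.2 fun i ↦
    ⟨le_of_forall_lt fun j hj ↦ (lt_μ_iff i j).2 ⟨hj.trans_le (hlam i.castSucc_le_succ),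
      ((T.colStrict _ _ i.castSucc_lt_succ j hj).trans_le (Fin.le_last _)).ne⟩,
    le_of_forall_lt fun j hj ↦ lt_lam hj⟩
  let S : SSYT N μ :=
    { entry i j := if h : j < μ i then (T.entry i.castSucc j).castPred (ne_last h)
        else ⟨0, i.pos⟩
      rowWeak i j₁ j₂ hj hj₂ := by
        rw [dif_pos (hj.trans_lt hj₂), dif_pos hj₂]
        exact T.rowWeak i.castSucc j₁ j₂ hj (lt_lam hj₂)
      colStrict i₁ i₂ hi j hj := by
        rw [dif_pos (hj.trans_le (antitone_of_mem_interlacing hlam hμ hi.le)), dif_pos hj]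
        exact T.colStrict _ _ (Fin.castSucc_lt_castSucc_iff.2 hi) j (lt_lam hj)
      zeroOutside i j hj := by rw [dif_neg hj.not_gt] }
  refine ⟨⟨⟨μ, hμ⟩, S⟩, SSYT.ext fun i j hj ↦ ?_⟩
  change extendEntry lam S i j = T.entry i j
  induction i using Fin.lastCases with
  | last => rw [extendEntry_last S hj, T.entry_last hlam hj]
  | cast i =>
    rw [extendEntry_castSucc S hj]
    split_ifs with h
    · simp [S, h]
    · by_contra hne
      exact h ((lt_μ_iff i j).2 ⟨hj, Ne.symm hne⟩)

theorem prod_extend {R : Type*} [CommMonoid R] {lam : Fin (N + 1) → ℕ} (hlam : Antitone lam)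
    (μ : interlacing lam) (S : SSYT N μ) (x : Fin (N + 1) → R) :
    ∏ i, ∏ j ∈ range (lam i), x ((extend hlam ⟨μ, S⟩).entry i j) =
      x (Fin.last N) ^ (lam (Fin.last N) + ∑ i : Fin N, (lam i.castSucc - μ.1 i)) *
        ∏ i, ∏ j ∈ range (μ.1 i), x (S.entry i j).castSucc := by
  have row (i : Fin N) :
      ∏ j ∈ range (lam i.castSucc), x (extendEntry lam S i.castSucc j) =
        x (Fin.last N) ^ (lam i.castSucc - μ.1 i) *
          ∏ j ∈ range (μ.1 i), x (S.entry i j).castSucc := by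
    have hμ := (mem_interlacing.1 μ.2 i).2
    have inner : ∏ j ∈ range (μ.1 i), x (extendEntry lam S i.castSucc j) =
        ∏ j ∈ range (μ.1 i), x (S.entry i j).castSucc := prod_congr rfl fun j hj ↦ by
      rw [extendEntry_castSucc S ((mem_range.1 hj).trans_le hμ), if_pos (mem_range.1 hj)]
    have outer : ∏ j ∈ Ico (μ.1 i) (lam i.castSucc), x (extendEntry lam S i.castSucc j) =
        x (Fin.last N) ^ (lam i.castSucc - μ.1 i) := by
      rw [← Nat.card_Ico, ← prod_const]
      exact prod_congr rfl fun j hj ↦ by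
        rw [extendEntry_castSucc S (mem_Ico.1 hj).2, if_neg (mem_Ico.1 hj).1.not_gt]
    rw [← prod_range_mul_prod_Ico _ hμ, inner, outer, mul_comm]
  have last_row : ∏ j ∈ range (lam (Fin.last N)), x (extendEntry lam S (Fin.last N) j) =
      x (Fin.last N) ^ lam (Fin.last N) := by
    rw [prod_congr rfl fun j hj ↦ by rw [extendEntry_last S (mem_range.1 hj)], prod_const,
      card_range]
  change ∏ i, ∏ j ∈ range (lam i), x (extendEntry lam S i j) = _
  rw [Fin.prod_univ_castSucc, last_row, prod_congr rfl fun i _ ↦ row i, prod_mul_distrib,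
    prod_pow_eq_pow_sum, pow_add]
  ac_rfl

end SSYT

variable {R : Type*} [CommRing R]

theorem schur_eq_sum_prod [TopologicalSpace R] (lam : Fin N → ℕ) (x : Fin N → R) :
    schur N lam x = ∑ T : SSYT N lam, ∏ i, ∏ j ∈ range (lam i), x (T.entry i j) := by
  simp_rw [schur, tsum_fintype, SSYT.prod_pow_content]

theorem schur_succ [TopologicalSpace R] {lam : Fin (N + 1) → ℕ} (hlam : Antitone lam)
    (x : Fin (N + 1) → R) :
    schur (N + 1) lam x = ∑ μ ∈ SSYT.interlacing lam,
      x (Fin.last N) ^ (lam (Fin.last N) + ∑ i : Fin N, (lam i.castSucc - μ i)) *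
        schur N μ fun i ↦ x i.castSucc := by
  simp_rw [schur_eq_sum_prod]
  rw [← Fintype.sum_bijective _ ⟨SSYT.extend_injective hlam, SSYT.extend_surjective hlam⟩ _ _
    fun _ ↦ rfl, Fintype.sum_sigma, ← sum_coe_sort (SSYT.interlacing lam)]
  simp_rw [SSYT.prod_extend, mul_sum]

theorem det_of_sum_col {n α : Type*} [Fintype n] [DecidableEq n] (s : n → Finset α)
    (f : n → n → α → R) :
    (Matrix.of fun i j ↦ ∑ a ∈ s j, f i j a).det =
      ∑ g ∈ Fintype.piFinset s, (Matrix.of fun i j ↦ f i j (g j)).det := by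
  have expand := (Matrix.detRowAlternating (R := R) (n := n)).toMultilinearMap.map_sum_finset
    (fun j a i ↦ f i j a) s
  rw [← Matrix.det_transpose]
  simp_rw [← Matrix.det_transpose (Matrix.of fun i j ↦ f i j _)]
  convert expand using 2
  · congr 1
    ext j i
    simp [Finset.sum_apply]
  · rfl

theorem det_eq_of_forall_col_eq_smul_add_succ {A B : Matrix (Fin (N + 1)) (Fin (N + 1)) R}
    (c : Fin N → R) (last : ∀ i, A i (Fin.last N) = B i (Fin.last N))
    (castSucc : ∀ i (j : Fin N), A i j.castSucc = B i j.castSucc + c j * A i j.succ) :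
    A.det = B.det := by
  rw [← Matrix.det_submatrix_equiv_self Fin.revPerm A,
    ← Matrix.det_submatrix_equiv_self Fin.revPerm B]
  refine Matrix.det_eq_of_forall_col_eq_smul_add_pred (fun j ↦ c j.rev) (fun i ↦ ?_) fun i j ↦ ?_
  · simpa using last i.rev
  · simpa [Fin.rev_succ, Fin.rev_castSucc] using castSucc i.rev j.rev

theorem det_succ_of_last_row_eq_zero (A : Matrix (Fin (N + 1)) (Fin (N + 1)) R)
    (h : ∀ j : Fin N, A (Fin.last N) j.castSucc = 0) :
    A.det = A (Fin.last N) (Fin.last N) * (A.submatrix Fin.castSucc Fin.castSucc).det := by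
  rw [Matrix.det_succ_row A (Fin.last N), Fin.sum_univ_castSucc]
  simp [h, Fin.succAbove_last, ← two_mul]

theorem sub_mul_sum_Icc_pow_mul_pow (x y : R) {a b : ℕ} (hab : a ≤ b) (c : ℕ) :
    (x - y) * ∑ k ∈ Icc a b, y ^ (b - k) * x ^ (k + c) =
      x ^ (b + 1 + c) - y ^ (b + 1 - a) * x ^ (a + c) := by
  have geom : ∑ k ∈ Icc a b, y ^ (b - k) * x ^ (k + c) =
      x ^ (a + c) * ∑ k ∈ range (b + 1 - a), x ^ k * y ^ (b + 1 - a - 1 - k) := by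
    rw [← Ico_add_one_right_eq_Icc, sum_Ico_eq_sum_range, mul_sum]
    refine sum_congr rfl fun k _ ↦ ?_
    rw [show b - (a + k) = b + 1 - a - 1 - k by lia]
    ring
  rw [geom, mul_left_comm, mul_comm (x - y), geom_sum₂_mul, mul_sub, ← pow_add]
  rw [show a + c + (b + 1 - a) = b + 1 + c by lia, mul_comm (x ^ (a + c))]

theorem det_pow_add_eq_mul_det_sum {lam : Fin (N + 1) → ℕ} (hlam : Antitone lam)
    (x : Fin (N + 1) → R) :
    (Matrix.of fun i j : Fin (N + 1) ↦ x i ^ (lam j + (N + 1 - 1 - j))).det =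
      x (Fin.last N) ^ lam (Fin.last N) * ((∏ i : Fin N, (x i.castSucc - x (Fin.last N))) *
        (Matrix.of fun i j : Fin N ↦ ∑ k ∈ Icc (lam j.succ) (lam j.castSucc),
          x (Fin.last N) ^ (lam j.castSucc - k) * x i.castSucc ^ (k + (N - 1 - j))).det) := by
  set y := x (Fin.last N) with hy
  let reduced : Matrix (Fin (N + 1)) (Fin (N + 1)) R := Matrix.of fun i ↦
    Fin.lastCases (x i ^ lam (Fin.last N)) fun j ↦
      (x i - y) * ∑ k ∈ Icc (lam j.succ) (lam j.castSucc),
        y ^ (lam j.castSucc - k) * x i ^ (k + (N - 1 - j))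
  have reduced_last (i) : reduced i (Fin.last N) = x i ^ lam (Fin.last N) := by simp [reduced]
  have reduced_castSucc (i) (j : Fin N) : reduced i j.castSucc =
      (x i - y) * ∑ k ∈ Icc (lam j.succ) (lam j.castSucc),
        y ^ (lam j.castSucc - k) * x i ^ (k + (N - 1 - j)) := by simp [reduced]
  have det_eq : (Matrix.of fun i j : Fin (N + 1) ↦ x i ^ (lam j + (N + 1 - 1 - j))).det =
      reduced.det := by
    refine det_eq_of_forall_col_eq_smul_add_succ
      (fun j ↦ y ^ (lam j.castSucc + 1 - lam j.succ)) (fun i ↦ ?_) fun i j ↦ ?_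
    · simp [reduced_last]
    · rw [reduced_castSucc, sub_mul_sum_Icc_pow_mul_pow _ _ (hlam j.castSucc_le_succ)]
      simp only [Matrix.of_apply, Fin.val_castSucc, Fin.val_succ]
      rw [show lam j.castSucc + (N + 1 - 1 - j) = lam j.castSucc + 1 + (N - 1 - j) by lia,
        show lam j.succ + (N + 1 - 1 - (j + 1)) = lam j.succ + (N - 1 - j) by lia]
      ring
  rw [det_eq, det_succ_of_last_row_eq_zero _ fun j ↦ by simp [reduced_castSucc, hy],
    reduced_last, ← hy, ← Matrix.det_mul_column]
  congr 2
  ext i j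
  exact reduced_castSucc i.castSucc j

theorem det_pow_add_succ {lam : Fin (N + 1) → ℕ} (hlam : Antitone lam) (x : Fin (N + 1) → R) :
    (Matrix.of fun i j : Fin (N + 1) ↦ x i ^ (lam j + (N + 1 - 1 - j))).det =
      (∏ i : Fin N, (x i.castSucc - x (Fin.last N))) * ∑ μ ∈ SSYT.interlacing lam,
        x (Fin.last N) ^ (lam (Fin.last N) + ∑ i : Fin N, (lam i.castSucc - μ i)) *
          (Matrix.of fun i j : Fin N ↦ x i.castSucc ^ (μ j + (N - 1 - j))).det := by
  rw [det_pow_add_eq_mul_det_sum hlam, mul_left_comm,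
    det_of_sum_col (fun j : Fin N ↦ Icc (lam j.succ) (lam j.castSucc)) fun i j k ↦
      x (Fin.last N) ^ (lam j.castSucc - k) * x i.castSucc ^ (k + (N - 1 - j)),
    SSYT.interlacing, Pi.Icc_eq]
  congr 1
  rw [mul_sum]
  refine sum_congr rfl fun μ _ ↦ ?_
  rw [pow_add, ← prod_pow_eq_pow_sum, mul_assoc, ← Matrix.det_mul_row]
  rfl

theorem schur_mul_prod_sub [TopologicalSpace R] {lam : Fin N → ℕ} (hlam : Antitone lam)
    (x : Fin N → R) :
    schur N lam x * ∏ i, ∏ j ∈ Ioi i, (x i - x j) =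
      (Matrix.of fun i j : Fin N ↦ x i ^ (lam j + (N - 1 - j))).det := by
  induction N with
  | zero =>
    have : Subsingleton (SSYT 0 lam) := ⟨fun _ _ ↦ SSYT.ext fun i ↦ i.elim0⟩
    let empty : SSYT 0 lam := ⟨fun i ↦ i.elim0, fun i ↦ i.elim0, fun i ↦ i.elim0, fun i ↦ i.elim0⟩
    simp [schur_eq_sum_prod, Fintype.sum_subsingleton _ empty]
  | succ N ih =>
    rw [schur_succ hlam, prod_prod_Ioi_castSucc, det_pow_add_succ hlam, mul_comm, mul_sum,
      mul_sum]
    refine sum_congr rfl fun μ hμ ↦ ?_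
    rw [← ih (SSYT.antitone_of_mem_interlacing hlam hμ)]
    ring

end Tableaux

section ConstantCoefficientOperators

open MvPolynomial
open scoped IsMulCommutative

variable {σ R : Type*} [CommRing R]

theorem pderiv_comm (i j : σ) (p : MvPolynomial σ R) :
    pderiv i (pderiv j p) = pderiv j (pderiv i p) := by
  classical
  have commutator :
      (⁅pderiv i, pderiv j⁆ : Derivation R (MvPolynomial σ R) (MvPolynomial σ R)) = 0 :=
    derivation_ext fun k ↦ by
      rw [Derivation.commutator_apply, pderiv_X, pderiv_X, Pi.single_apply, Pi.single_apply]
      split_ifs <;> simp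
  rw [← sub_eq_zero, ← Derivation.commutator_apply, commutator, Derivation.zero_apply]

/-- The differential operator `f(∂)` with constant coefficients, obtained from a polynomial `f` by
substituting the partial derivatives for the variables. -/
noncomputable def constDiffOp : MvPolynomial σ R →ₐ[R] Module.End R (MvPolynomial σ R) :=
  let partials : Set (Module.End R (MvPolynomial σ R)) := Set.range fun i ↦ (pderiv i).toLinearMap
  haveI : IsMulCommutative (Algebra.adjoin R partials) :=
    Algebra.isMulCommutative_adjoin R <| by
      rintro _ ⟨i, rfl⟩ _ ⟨j, rfl⟩
      exact LinearMap.ext (pderiv_comm i j)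
  (Algebra.adjoin R partials).val.comp
    (aeval fun i ↦ (⟨_, Algebra.subset_adjoin ⟨i, rfl⟩⟩ : Algebra.adjoin R partials))

@[simp]
theorem constDiffOp_X (i : σ) :
    constDiffOp (X i) = (pderiv i : Derivation R _ (MvPolynomial σ R)).toLinearMap := by
  simp [constDiffOp]

theorem constDiffOp_X_apply (i : σ) (p : MvPolynomial σ R) : constDiffOp (X i) p = pderiv i p := by
  simp

theorem constDiffOp_X_mul (f : MvPolynomial σ R) (i : σ) (p : MvPolynomial σ R) :
    constDiffOp f (X i * p) = X i * constDiffOp f p + constDiffOp (pderiv i f) p := by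
  classical
  induction f using MvPolynomial.induction_on generalizing p with
  | C a => simp [← algebraMap_eq]
  | add f g hf hg => simp only [map_add, LinearMap.add_apply, hf, hg]; ring
  | mul_X f j hf =>
    have mul_X_apply (q : MvPolynomial σ R) :
        constDiffOp (f * X j) q = constDiffOp f (pderiv j q) := by simp
    have pderiv_mul_X : pderiv i (f * X j) = pderiv i f * X j + f * C (if j = i then 1 else 0) := by
      rw [pderiv_mul, pderiv_X, Pi.single_apply, apply_ite C, C_1, C_0]
    have pderiv_X_mul :
        pderiv j (X i * p) = X i * pderiv j p + (if j = i then 1 else 0 : R) • p := by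
      rw [pderiv_mul, pderiv_X, Pi.single_apply, add_comm, ite_smul]
      simp [eq_comm]
    rw [mul_X_apply, pderiv_X_mul, map_add, hf, map_smul, mul_X_apply, pderiv_mul_X, map_add]
    split_ifs <;> simp [add_assoc]

theorem constDiffOp_X_sq_mul (f : MvPolynomial σ R) (i : σ) (p : MvPolynomial σ R) :
    constDiffOp f (X i ^ 2 * p) = X i ^ 2 * constDiffOp f p +
      2 * (X i * constDiffOp (pderiv i f) p) + constDiffOp (pderiv i (pderiv i f)) p := by
  rw [pow_two, mul_assoc]
  simp only [constDiffOp_X_mul]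
  ring

theorem constDiffOp_sum_sq_mul_of_harmonic [Fintype σ] {f : MvPolynomial σ R}
    (hf : ∑ i, pderiv i (pderiv i f) = 0) (p : MvPolynomial σ R) :
    constDiffOp f ((∑ i, X i ^ 2) * p) = (∑ i, X i ^ 2) * constDiffOp f p +
      2 * ∑ i, X i * constDiffOp (pderiv i f) p := by
  have laplacian : ∑ i, constDiffOp (pderiv i (pderiv i f)) p = 0 := by
    rw [← LinearMap.sum_apply, ← map_sum, hf, map_zero, LinearMap.zero_apply]
  simp_rw [Finset.sum_mul, map_sum, constDiffOp_X_sq_mul, Finset.sum_add_distrib, laplacian,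
    ← Finset.mul_sum, add_zero]

theorem pderiv_linear_pow [Fintype σ] (a : σ → R) (i : σ) (n : ℕ) :
    pderiv i ((∑ j, C (a j) * X j : MvPolynomial σ R) ^ n) =
      (n * a i) • (∑ j, C (a j) * X j : MvPolynomial σ R) ^ (n - 1) := by
  classical
  simp [pderiv_X, Pi.single_apply, smul_eq_C_mul, mul_assoc, mul_comm (C (a i))]

end ConstantCoefficientOperators

section Vandermonde

open MvPolynomial Finset

variable {A R : Type*} [CommRing R] [CommRing A] [Algebra R A]

theorem derivation_prod {ι M : Type*} [DecidableEq ι] [AddCommGroup M] [Module R M] [Module A M]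
    (D : Derivation R A M) (s : Finset ι) (f : ι → A) :
    D (∏ t ∈ s, f t) = ∑ t ∈ s, (∏ u ∈ s.erase t, f u) • D (f t) := by
  induction s using Finset.induction_on with
  | empty => simp
  | insert a s ha ih =>
    rw [prod_insert ha, D.leibniz, ih, sum_insert ha, erase_insert ha, add_comm, smul_sum]
    congr 1
    refine sum_congr rfl fun t ht ↦ ?_
    rw [erase_insert_of_ne (ne_of_mem_of_not_mem ht ha).symm, prod_insert (by simp [ha]), mul_smul]

variable {n : Type*} [Fintype n] [DecidableEq n]

theorem derivation_det_eq_zero (D : Derivation R A A) {B : Matrix n n A}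
    (hB : ∀ i j, D (B i j) = 0) : D B.det = 0 := by
  simp [Matrix.det_apply, derivation_prod, hB]

theorem det_updateRow_eq_sum_mul_adjugate (B : Matrix n n A) (i : n) (w : n → A) :
    (B.updateRow i w).det = ∑ j, w j * B.adjugate j i := by
  rw [← Matrix.cramer_transpose_apply, Matrix.cramer_eq_adjugate_mulVec]
  simp [Matrix.mulVec, dotProduct, ← Matrix.adjugate_transpose, mul_comm]

theorem derivation_det_of_row (D : Derivation R A A) (B : Matrix n n A) (i : n)
    (hB : ∀ k ≠ i, ∀ j, D (B k j) = 0) :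
    D B.det = (B.updateRow i fun j ↦ D (B i j)).det := by
  have adjugate (j : n) : D (B.adjugate j i) = 0 := by
    rw [Matrix.adjugate_apply]
    refine derivation_det_eq_zero D fun k l ↦ ?_
    by_cases hk : k = i
    · subst hk
      by_cases hl : l = j <;> simp [hl]
    · simpa [hk] using hB k hk l
  rw [det_updateRow_eq_sum_mul_adjugate, Matrix.det_eq_sum_mul_adjugate_row B i]
  simp [adjugate, mul_comm]

theorem sum_det_updateRow_mul (B M : Matrix n n A) :
    ∑ i, (B.updateRow i ((B * M) i)).det = M.trace * B.det := by
  simp_rw [det_updateRow_eq_sum_mul_adjugate, ← Matrix.mul_apply, ← Matrix.diag_apply (B * M * _)]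
  rw [← Matrix.trace, Matrix.mul_assoc, Matrix.trace_mul_comm, Matrix.mul_assoc,
    Matrix.adjugate_mul]
  simp [mul_comm]

variable {N : ℕ}

/-- The pairs `(i, j)` with `i < j`. -/
def ltPairs (N : ℕ) : Finset (Fin N × Fin N) := {t | t.1 < t.2}

@[to_additive]
theorem prod_ltPairs {M : Type*} [CommMonoid M] (f : Fin N → Fin N → M) :
    ∏ t ∈ ltPairs N, f t.1 t.2 = ∏ i, ∏ j ∈ Ioi i, f i j := by
  rw [ltPairs, prod_filter, Fintype.prod_prod_type]
  refine prod_congr rfl fun i _ ↦ ?_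
  rw [← prod_filter, filter_lt_eq_Ioi]

variable (R N) in
/-- The Vandermonde polynomial `Δ = ∏ i < j, (X j - X i)`. -/
noncomputable def vandermondePoly : MvPolynomial (Fin N) R := ∏ t ∈ ltPairs N, (X t.2 - X t.1)

theorem vandermondePoly_eq_det :
    vandermondePoly R N = (Matrix.vandermonde (X : Fin N → MvPolynomial (Fin N) R)).det := by
  rw [Matrix.det_vandermonde, vandermondePoly,
    prod_ltPairs fun i j ↦ (X j - X i : MvPolynomial _ R)]

theorem vandermondePoly_harmonic :
    ∑ i, pderiv i (pderiv i (vandermondePoly R N)) = 0 := by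
  let V := Matrix.vandermonde (X : Fin N → MvPolynomial (Fin N) R)
  let M : Matrix (Fin N) (Fin N) (MvPolynomial (Fin N) R) :=
    Matrix.of fun k j ↦ if (k : ℕ) + 2 = j then (j * (j - 1 : ℕ) : MvPolynomial (Fin N) R) else 0
  have pderiv_other_rows {i k : Fin N} (hk : k ≠ i) (j : Fin N) : pderiv i (V k j) = 0 := by
    simp [V, pderiv_X_of_ne hk]
  have row (i j : Fin N) : pderiv i (pderiv i (V i j)) = (V * M) i j := by
    simp only [V, M, Matrix.vandermonde_apply, Matrix.mul_apply, Matrix.of_apply]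
    by_cases hj : 2 ≤ (j : ℕ)
    · rw [sum_eq_single (⟨j - 2, by lia⟩ : Fin N)]
      · simp [Nat.sub_add_cancel hj, Nat.sub_sub, mul_comm, mul_assoc]
      · intro k _ hk
        rw [if_neg fun h ↦ hk (Fin.ext (by simp; lia)), mul_zero]
      · simp
    · rw [sum_eq_zero fun k _ ↦ by rw [if_neg (by lia), mul_zero]]
      obtain hj | hj : (j : ℕ) = 0 ∨ (j : ℕ) = 1 := by lia
      all_goals simp [hj]
  have second_deriv (i) : pderiv i (pderiv i V.det) = (V.updateRow i ((V * M) i)).det := by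
    rw [derivation_det_of_row _ V i fun k hk ↦ pderiv_other_rows hk,
      derivation_det_of_row _ _ i fun k hk j ↦ by
        rw [Matrix.updateRow_ne hk, pderiv_other_rows hk],
      Matrix.updateRow_idem]
    simp only [Matrix.updateRow_self, row]
  have trace_M : M.trace = 0 := by simp [M, Matrix.trace]
  rw [vandermondePoly_eq_det, sum_congr rfl fun i _ ↦ second_deriv i, sum_det_updateRow_mul,
    trace_M, zero_mul]

variable (R) in
/-- The Vandermonde polynomial with the factor of the pair `t` left out. -/
noncomputable def vandermondeErase (t : Fin N × Fin N) : MvPolynomial (Fin N) R :=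
  ∏ u ∈ (ltPairs N).erase t, (X u.2 - X u.1)

theorem vandermondePoly_eq_erase {t : Fin N × Fin N} (ht : t ∈ ltPairs N) :
    vandermondePoly R N = (X t.2 - X t.1) * vandermondeErase R t :=
  (mul_prod_erase _ _ ht).symm

theorem constDiffOp_vandermondePoly_eq_erase {t : Fin N × Fin N} (ht : t ∈ ltPairs N)
    (p : MvPolynomial (Fin N) R) :
    constDiffOp (vandermondePoly R N) p = pderiv t.2 (constDiffOp (vandermondeErase R t) p) -
      pderiv t.1 (constDiffOp (vandermondeErase R t) p) := by
  rw [vandermondePoly_eq_erase ht, map_mul, map_sub]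
  simp

theorem constDiffOp_vandermondePoly_sum_sq_mul (p : MvPolynomial (Fin N) R) :
    constDiffOp (vandermondePoly R N) ((∑ i, X i ^ 2) * p) =
      (∑ i, X i ^ 2) * constDiffOp (vandermondePoly R N) p +
        2 * ∑ t ∈ ltPairs N, (X t.2 - X t.1) * constDiffOp (vandermondeErase R t) p := by
  have pderiv_vandermonde (i : Fin N) : constDiffOp (pderiv i (vandermondePoly R N)) p =
      ∑ t ∈ ltPairs N, pderiv i (X t.2 - X t.1) * constDiffOp (vandermondeErase R t) p := by
    rw [vandermondePoly, derivation_prod, map_sum, LinearMap.sum_apply]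
    refine sum_congr rfl fun t _ ↦ ?_
    rw [smul_eq_mul, mul_comm, map_mul, map_sub, pderiv_X, pderiv_X, Pi.single_apply,
      Pi.single_apply, vandermondeErase]
    split_ifs <;> simp
  have euler (t : Fin N × Fin N) :
      ∑ i, X i * pderiv i (X t.2 - X t.1 : MvPolynomial (Fin N) R) = X t.2 - X t.1 := by
    simp [pderiv_X, Pi.single_apply, mul_sub]
  rw [constDiffOp_sum_sq_mul_of_harmonic vandermondePoly_harmonic]
  simp_rw [pderiv_vandermonde, mul_sum]
  rw [sum_comm]
  refine congrArg (_ + ·) (sum_congr rfl fun t _ ↦ ?_)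
  conv_rhs => rw [← euler t, sum_mul, mul_sum]
  simp_rw [mul_assoc]

theorem constDiffOp_vandermondePoly_linear_pow (a : Fin N → R) (n : ℕ) :
    constDiffOp (vandermondePoly R N) ((∑ j, C (a j) * X j) ^ n) =
      (n.descFactorial #(ltPairs N) * ∏ t ∈ ltPairs N, (a t.2 - a t.1)) •
        (∑ j, C (a j) * X j : MvPolynomial (Fin N) R) ^ (n - #(ltPairs N)) := by
  rw [vandermondePoly]
  induction ltPairs N using Finset.induction_on with
  | empty => simp
  | insert t s ht ih =>
    rw [prod_insert ht, map_mul, Module.End.mul_apply, ih, map_smul, map_sub, LinearMap.sub_apply,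
      constDiffOp_X_apply, constDiffOp_X_apply, pderiv_linear_pow, pderiv_linear_pow, ← sub_smul,
      smul_smul, prod_insert ht, card_insert_of_notMem ht, Nat.descFactorial_succ, Nat.sub_sub]
    congr 1
    push_cast
    ring

end Vandermonde

section IteratedCommutators

open Matrix

attribute [local instance] LieRing.ofAssociativeRing

variable (R : Type*) {A : Type*} [CommRing R] [Ring A] [Algebra R A]
variable {n : Type*} [Fintype n] [DecidableEq n]

theorem lie_mul_eq_lie_mul_add_mul_lie (q a b : A) : ⁅q, a * b⁆ = ⁅q, a⁆ * b + a * ⁅q, b⁆ := by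
  simp only [Ring.lie_def]
  noncomm_ring

theorem ad_pow_mul {q d : A} (hd : ⁅q, ⁅q, d⁆⁆ = 0) (m : A) (k : ℕ) :
    (LieAlgebra.ad R A q ^ (k + 1)) (d * m) = d * (LieAlgebra.ad R A q ^ (k + 1)) m +
      (k + 1) • (⁅q, d⁆ * (LieAlgebra.ad R A q ^ k) m) := by
  have leibniz (a b : A) :
      LieAlgebra.ad R A q (a * b) = ⁅q, a⁆ * b + a * LieAlgebra.ad R A q b :=
    lie_mul_eq_lie_mul_add_mul_lie q a b
  induction k with
  | zero => simp [leibniz, add_comm]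
  | succ k ih =>
    rw [pow_succ', Module.End.mul_apply, ih, map_add, map_nsmul, leibniz, leibniz, hd,
      ← Module.End.mul_apply, ← Module.End.mul_apply, ← pow_succ', ← pow_succ',
      succ_nsmul _ (k + 1)]
    simp only [zero_mul, zero_add]
    abel

theorem ad_pow_pow {q d : A} (hd : ⁅q, ⁅q, d⁆⁆ = 0) (k : ℕ) :
    (LieAlgebra.ad R A q ^ k) (d ^ k) = k.factorial • ⁅q, d⁆ ^ k := by
  induction k with
  | zero => simp
  | succ k ih =>
    have commute_pow : LieAlgebra.ad R A q (⁅q, d⁆ ^ k) = 0 := by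
      rw [← commute_iff_lie_eq] at hd
      exact (hd.pow_right k).lie_eq
    rw [pow_succ' d, ad_pow_mul R hd, pow_succ', Module.End.mul_apply, ih, map_nsmul, commute_pow,
      smul_zero, mul_zero, zero_add, mul_smul_comm, smul_smul, ← pow_succ', Nat.factorial_succ]

theorem lie_pow_eq_lie_pow {d a b : A} (h : ⁅d, a⁆ = ⁅d, b⁆) (k : ℕ) : ⁅d ^ k, a⁆ = ⁅d ^ k, b⁆ := by
  have commute_sub (x : A) : ⁅x, a⁆ = ⁅x, b⁆ ↔ Commute x (a - b) := by
    rw [commute_iff_lie_eq, ← sub_eq_zero, Ring.lie_def, Ring.lie_def, Ring.lie_def]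
    noncomm_ring
  rw [commute_sub] at h ⊢
  exact h.pow_left k

theorem lie_scalar_eq_map (q : A) (M : Matrix n n A) : ⁅scalar n q, M⁆ = M.map (⁅q, ·⁆) := by
  ext i j
  simp [Ring.lie_def, Matrix.diagonal_mul, Matrix.mul_diagonal]

theorem ad_pow_trace_pow {q : A} {D : Matrix n n A} (hD : ∀ i j, ⁅q, ⁅q, D i j⁆⁆ = 0) (k : ℕ) :
    (LieAlgebra.ad R A q ^ k) (D ^ k).trace = k.factorial • ((D.map (⁅q, ·⁆)) ^ k).trace := by
  have ad_trace : Function.Semiconj (trace : Matrix n n A → A)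
      (LieAlgebra.ad R (Matrix n n A) (scalar n q)) (LieAlgebra.ad R A q) :=
    fun M ↦ by simp [Ring.lie_def, trace]
  have double_lie : ⁅scalar n q, ⁅scalar n q, D⁆⁆ = 0 := by
    simp_rw [lie_scalar_eq_map]
    exact Matrix.ext hD
  rw [Module.End.pow_apply, ← (ad_trace.iterate_right k).eq, ← Module.End.pow_apply,
    ad_pow_pow R double_lie, trace_smul, lie_scalar_eq_map]

end IteratedCommutators

section DerivationMatrices

open Matrix

attribute [local instance] LieRing.ofAssociativeRing

variable {R A : Type*} [CommRing R] [CommRing A] [Algebra R A]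
variable {n : Type*} [Fintype n]

theorem lie_lmul_derivation (q : A) (D : Derivation R A A) :
    ⁅Algebra.lmul R A q, (D : Module.End R A)⁆ = Algebra.lmul R A (-D q) := by
  ext a
  simp [Ring.lie_def, mul_comm]

theorem ad_lmul_pow_trace_pow [DecidableEq n] (q : A) (D : Matrix n n (Derivation R A A)) (k : ℕ) :
    (LieAlgebra.ad R (Module.End R A) (Algebra.lmul R A q) ^ k)
        ((D.map fun δ ↦ (δ : Module.End R A)) ^ k).trace =
      k.factorial • Algebra.lmul R A (((-1 : R) • D.map (· q)) ^ k).trace := by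
  have lie_eq : (D.map fun δ ↦ (δ : Module.End R A)).map (⁅Algebra.lmul R A q, ·⁆) =
      ((-1 : R) • D.map (· q)).map (Algebra.lmul R A) := by
    ext1 i j
    simpa using lie_lmul_derivation q (D i j)
  have double_lie (i j : n) :
      ⁅Algebra.lmul R A q, ⁅Algebra.lmul R A q, D.map (fun δ ↦ (δ : Module.End R A)) i j⁆⁆ = 0 := by
    rw [map_apply, lie_lmul_derivation, ← commute_iff_lie_eq]
    exact (Commute.all q _).map (Algebra.lmul R A)
  rw [ad_pow_trace_pow R double_lie, lie_eq, AddMonoidHom.map_trace, ← AlgHom.mapMatrix_apply,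
    ← AlgHom.mapMatrix_apply, map_pow]

theorem map_derivation_mul (D : Derivation R A A) (B M : Matrix n n A) :
    (B * M).map D = B.map D * M + B * M.map D := by
  ext i j
  simp [Matrix.mul_apply, Finset.sum_add_distrib, mul_comm, add_comm]

theorem map_derivation_pow_eq_lie [DecidableEq n] {D : Derivation R A A} {B Y : Matrix n n A}
    (hB : B.map D = ⁅Y, B⁆) (k : ℕ) : (B ^ k).map D = ⁅Y, B ^ k⁆ := by
  induction k with
  | zero =>
    ext i j
    by_cases h : i = j <;> simp [h, Ring.lie_def]
  | succ k ih => rw [pow_succ, map_derivation_mul, ih, hB, lie_mul_eq_lie_mul_add_mul_lie]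

theorem derivation_trace_pow_eq_zero [DecidableEq n] {D : Derivation R A A} {B Y : Matrix n n A}
    (hB : B.map D = ⁅Y, B⁆) (k : ℕ) : D (B ^ k).trace = 0 := by
  rw [← LieAlgebra.matrix_trace_commutator_zero n A Y (B ^ k), ← map_derivation_pow_eq_lie hB]
  simp [trace]

end DerivationMatrices

section RadialPart

open MvPolynomial Matrix

attribute [local instance] LieRing.ofAssociativeRing

variable {R : Type*} [CommRing R] {n : Type*} [Fintype n]

/-- The derivation `P ↦ d/dt P(X + t (Y X - X Y))` at `t = 0`, i.e. the infinitesimal action of `Y`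
by conjugation on the polynomials in the entries `X (i, j)` of a generic matrix. -/
noncomputable def conjDerivation (Y : Matrix n n R) :
    Derivation R (MvPolynomial (n × n) R) (MvPolynomial (n × n) R) :=
  mkDerivation R fun t ↦
    ⁅(Y.map C : Matrix n n (MvPolynomial (n × n) R)), mvPolynomialX n n R⁆ t.1 t.2

theorem conjDerivation_X (Y : Matrix n n R) (i j : n) :
    conjDerivation Y (X (i, j)) = ∑ k, (C (Y i k) * X (k, j) - C (Y k j) * X (i, k)) := by
  simp [conjDerivation, mkDerivation_X, Ring.lie_def, Matrix.mul_apply, mul_comm]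

theorem conjDerivation_add (Y Z : Matrix n n R) :
    conjDerivation (Y + Z) = conjDerivation Y + conjDerivation Z := by
  refine derivation_ext fun ⟨i, j⟩ ↦ ?_
  simp only [conjDerivation_X, Derivation.add_apply, Matrix.add_apply, map_add,
    ← Finset.sum_add_distrib]
  exact Finset.sum_congr rfl fun k _ ↦ by ring

theorem conjDerivation_smul (c : R) (Y : Matrix n n R) :
    conjDerivation (c • Y) = c • conjDerivation Y := by
  refine derivation_ext fun ⟨i, j⟩ ↦ ?_
  simp [conjDerivation_X, smul_eq_C_mul, Finset.mul_sum, mul_assoc, mul_sub]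

theorem mvPolynomialX_map_conjDerivation (Y : Matrix n n R) :
    (mvPolynomialX n n R).map (conjDerivation Y) =
      ⁅(Y.map C : Matrix n n (MvPolynomial (n × n) R)), mvPolynomialX n n R⁆ := by
  ext1 i j
  simp [conjDerivation, mkDerivation_X]

variable (R n) in
/-- The polynomials killed by every functional that is invariant under infinitesimal conjugation. -/
noncomputable def conjBoundaries : Submodule R (MvPolynomial (n × n) R) :=
  ⨆ Y : Matrix n n R, LinearMap.range (conjDerivation Y).toLinearMap

theorem conjDerivation_mem_conjBoundaries (Y : Matrix n n R) (P : MvPolynomial (n × n) R) :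
    conjDerivation Y P ∈ conjBoundaries R n :=
  Submodule.mem_iSup_of_mem Y ⟨P, rfl⟩

theorem map_mem_conjBoundaries {u : Module.End R (MvPolynomial (n × n) R)}
    (hu : ∀ Y, Commute u (conjDerivation Y).toLinearMap) {P : MvPolynomial (n × n) R}
    (hP : P ∈ conjBoundaries R n) : u P ∈ conjBoundaries R n := by
  induction hP using Submodule.iSup_induction' with
  | mem Y P hP =>
    obtain ⟨P, rfl⟩ := hP
    rw [← Module.End.mul_apply, (hu Y).eq]
    exact conjDerivation_mem_conjBoundaries Y (u P)
  | zero => simp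
  | add P Q _ _ hP hQ => simpa using add_mem hP hQ

variable (R n) in
/-- The matrix `D` of partial derivatives, dual to the generic matrix: `D i j = ∂ / ∂ X (j, i)`. -/
noncomputable def pderivMatrix :
    Matrix n n (Derivation R (MvPolynomial (n × n) R) (MvPolynomial (n × n) R)) :=
  Matrix.of fun i j ↦ pderiv (j, i)

theorem derivation_sum_apply {A M ι : Type*} [CommRing A] [Algebra R A] [AddCommGroup M]
    [Module R M] [Module A M] (D : ι → Derivation R A M) (s : Finset ι) (a : A) :
    (∑ i ∈ s, D i) a = ∑ i ∈ s, D i a := by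
  rw [← Derivation.coeFnAddMonoidHom_apply, map_sum, Finset.sum_apply]
  rfl

theorem commutator_pderiv_conjDerivation (Y : Matrix n n R) (i j : n) :
    ⁅pderivMatrix R n i j, conjDerivation Y⁆ =
      ∑ k, (Y k j • pderivMatrix R n i k - Y i k • pderivMatrix R n k j) := by
  classical
  refine derivation_ext fun ⟨a, b⟩ ↦ ?_
  have pderiv_X_pair (a b c d : n) : pderiv (a, b) (X (c, d) : MvPolynomial (n × n) R) =
      if c = a ∧ d = b then 1 else 0 := by
    simp [pderiv_X, Pi.single_apply]
  have conjDerivation_pderiv_X :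
      conjDerivation Y (pderivMatrix R n i j (X (a, b) : MvPolynomial (n × n) R)) = 0 := by
    rw [pderivMatrix, of_apply, pderiv_X_pair]
    split_ifs <;> simp
  rw [Derivation.commutator_apply, conjDerivation_pderiv_X, derivation_sum_apply]
  simp [pderivMatrix, conjDerivation_X, pderiv_X_pair, Finset.sum_sub_distrib, ite_and,
    smul_eq_C_mul]

variable (R n) in
/-- The differential operator `tr (D ^ k)`, where `D` is the matrix of partial derivatives. -/
noncomputable def pderivTracePow [DecidableEq n] (k : ℕ) :
    Module.End R (MvPolynomial (n × n) R) :=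
  (((pderivMatrix R n).map fun δ ↦ (δ : Module.End R (MvPolynomial (n × n) R))) ^ k).trace

theorem commute_pderivTracePow_conjDerivation [DecidableEq n] (k : ℕ) (Y : Matrix n n R) :
    Commute (pderivTracePow R n k) (conjDerivation Y).toLinearMap := by
  set D : Matrix n n (Module.End R (MvPolynomial (n × n) R)) :=
    (pderivMatrix R n).map fun δ ↦ (δ : Module.End R (MvPolynomial (n × n) R))
  let d : Module.End R (MvPolynomial (n × n) R) := (conjDerivation Y).toLinearMap
  let Y' := Y.map (algebraMap R (Module.End R (MvPolynomial (n × n) R)))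
  have lie_scalar : ⁅D, scalar n d⁆ = ⁅D, Y'⁆ := by
    ext1 i j
    have entry := congrArg Derivation.toLinearMap (commutator_pderiv_conjDerivation Y i j)
    rw [Derivation.commutator_coe_linear_map] at entry
    simp only [Ring.lie_def, Matrix.sub_apply, scalar_apply, mul_diagonal, diagonal_mul] at entry ⊢
    refine entry.trans (LinearMap.ext fun P ↦ ?_)
    simp [D, Y', Matrix.mul_apply, derivation_sum_apply, LinearMap.sum_apply,
      Finset.sum_sub_distrib]
  have trace_lie : (⁅D ^ k, Y'⁆).trace = 0 := by
    rw [Ring.lie_def, trace_sub]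
    simp only [trace, diag_apply, Matrix.mul_apply, Y', map_apply, ← Algebra.commutes]
    rw [Finset.sum_comm, sub_self]
  rw [← lie_pow_eq_lie_pow lie_scalar] at trace_lie
  rw [commute_iff_lie_eq]
  simpa [pderivTracePow, Ring.lie_def, trace, Finset.mul_sum, Finset.sum_mul] using trace_lie

end RadialPart

section DiagonalPolynomials

open MvPolynomial Matrix

variable {R : Type*} [CommRing R]

section Diagonal

variable {n : Type*}

/-- The substitution `x i ↦ X (i, i)`, viewing a polynomial as a function of the diagonal entries of
a generic matrix. -/
noncomputable def diagRename : MvPolynomial n R →ₐ[R] MvPolynomial (n × n) R :=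
  rename fun i ↦ (i, i)

theorem diagRename_X (i : n) : diagRename (X i : MvPolynomial n R) = X (i, i) := rename_X _ i

theorem derivation_diagRename [Fintype n]
    (D : Derivation R (MvPolynomial (n × n) R) (MvPolynomial (n × n) R)) (p : MvPolynomial n R) :
    D (diagRename p) = ∑ i, D (X (i, i)) * diagRename (pderiv i p) := by
  classical
  induction p using MvPolynomial.induction_on with
  | C a => simp [diagRename]
  | add p q hp hq => simp [hp, hq, mul_add, Finset.sum_add_distrib]
  | mul_X p j hp =>
    have pderiv_mul_X (i : n) : diagRename (pderiv i (p * X j)) =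
        diagRename (pderiv i p) * X (j, j) + if j = i then diagRename p else 0 := by
      by_cases h : j = i <;> simp [h, pderiv_X, diagRename_X, mul_comm, add_comm]
    simp_rw [pderiv_mul_X, mul_add, ← mul_assoc, Finset.sum_add_distrib, ← Finset.sum_mul, ← hp]
    simp [diagRename_X, mul_comm]

theorem pderivMatrix_diagRename [DecidableEq n] (i j : n) (p : MvPolynomial n R) :
    pderivMatrix R n i j (diagRename p) = if i = j then diagRename (pderiv i p) else 0 := by
  have diag_injective : Function.Injective fun i : n ↦ (i, i) := fun _ _ h ↦ congrArg Prod.fst h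
  rw [pderivMatrix, of_apply, diagRename]
  split_ifs with h
  · rw [← h]
    exact pderiv_rename diag_injective i p
  · refine pderiv_eq_zero_of_notMem_vars fun hmem ↦ ?_
    obtain ⟨a, _, ha⟩ := Finset.mem_image.1 (vars_rename _ p hmem)
    exact h ((congrArg Prod.snd ha).symm.trans (congrArg Prod.fst ha))

variable [Fintype n]

theorem pderivMatrix_pow_diagRename [DecidableEq n] (k : ℕ) (i j : n) (p : MvPolynomial n R) :
    (((pderivMatrix R n).map fun δ ↦ (δ : Module.End R (MvPolynomial (n × n) R))) ^ k) i j
      (diagRename p) = if i = j then diagRename (((pderiv i).toLinearMap ^ k) p) else 0 := by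
  induction k generalizing p with
  | zero =>
    by_cases h : i = j <;> simp [h, one_apply]
  | succ k ih =>
    rw [pow_succ, Matrix.mul_apply, LinearMap.sum_apply, Finset.sum_eq_single j]
    · rw [Module.End.mul_apply, map_apply, Derivation.coeFn_coe, pderivMatrix_diagRename,
        if_pos rfl, ih]
      by_cases h : i = j <;> simp [h, pow_succ]
    · intro l _ hl
      simp [pderivMatrix_diagRename, hl]
    · simp

theorem pderivTracePow_diagRename [DecidableEq n] (k : ℕ) (p : MvPolynomial n R) :
    pderivTracePow R n k (diagRename p) = diagRename (constDiffOp (psum n R k) p) := by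
  simp [pderivTracePow, trace, LinearMap.sum_apply, pderivMatrix_pow_diagRename, psum]

theorem conjDerivation_single_X [DecidableEq n] (i j a b : n) :
    conjDerivation (Matrix.single i j (1 : R)) (X (a, b)) =
      (if i = a then X (j, b) else 0) - if j = b then X (a, i) else 0 := by
  simp [conjDerivation_X, Matrix.single_apply, Finset.sum_sub_distrib, ite_and,
    apply_ite (C : R →+* MvPolynomial (n × n) R)]

theorem mul_diagRename_sub_mem_conjBoundaries (i j : n) (q : MvPolynomial n R) :
    X (i, j) * X (j, i) * diagRename (pderiv i q - pderiv j q) -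
      diagRename ((X i - X j) * q) ∈ conjBoundaries R n := by
  classical
  have diag_sum : ∑ a, conjDerivation (Matrix.single i j (1 : R)) (X (a, a)) *
      diagRename (pderiv a q) = X (j, i) * diagRename (pderiv i q - pderiv j q) := by
    simp [conjDerivation_single_X, sub_mul, mul_sub, Finset.sum_sub_distrib]
  convert conjDerivation_mem_conjBoundaries (Matrix.single i j 1) (X (i, j) * diagRename q) using 1
  rw [Derivation.leibniz, derivation_diagRename, diag_sum, conjDerivation_single_X]
  simp only [if_true, map_mul, map_sub, diagRename_X, smul_eq_mul]
  ring

end Diagonal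

theorem trace_mvPolynomialX_sq (N : ℕ) :
    (mvPolynomialX (Fin N) (Fin N) R ^ 2).trace =
      ∑ i, X (i, i) ^ 2 + 2 * ∑ t ∈ ltPairs N, X (t.2, t.1) * X (t.1, t.2) := by
  have off_diag := Finset.sum_sum_Ioi_add_eq_sum_sum_off_diag
    fun i j : Fin N ↦ (X (i, j) * X (j, i) : MvPolynomial (Fin N × Fin N) R)
  have split_diag (i : Fin N) :
      ∑ j, (X (i, j) * X (j, i) : MvPolynomial (Fin N × Fin N) R) =
        X (i, i) ^ 2 + ∑ j ∈ {i}ᶜ, X (j, i) * X (i, j) := by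
    rw [Fintype.sum_eq_add_sum_compl i, sq]
    simp_rw [mul_comm]
  simp only [pow_two (mvPolynomialX _ _ _), trace, diag_apply, Matrix.mul_apply,
    mvPolynomialX_apply, split_diag, Finset.sum_add_distrib, ← off_diag]
  rw [sum_ltPairs fun i j ↦ (X (j, i) * X (i, j) : MvPolynomial (Fin N × Fin N) R), Finset.mul_sum]
  simp_rw [Finset.mul_sum, two_mul, mul_comm, Finset.sum_add_distrib]

end DiagonalPolynomials

section HarishChandra

open MvPolynomial Matrix

attribute [local instance] LieRing.ofAssociativeRing

variable {R : Type*} [CommRing R] {N : ℕ}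

/-- `v` is the radial part of `u`: modulo `conjBoundaries`, applying `u` to the diagonal polynomial
`constDiffOp Δ p` amounts to applying `v` to `p`. -/
structure IsRadialPart (u : Module.End R (MvPolynomial (Fin N × Fin N) R))
    (v : Module.End R (MvPolynomial (Fin N) R)) : Prop where
  map_mem {P} (hP : P ∈ conjBoundaries R (Fin N)) : u P ∈ conjBoundaries R (Fin N)
  map_diagRename (p) : u (diagRename (constDiffOp (vandermondePoly R N) p)) ≡
    diagRename (constDiffOp (vandermondePoly R N) (v p)) [SMOD conjBoundaries R (Fin N)]

namespace IsRadialPart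

variable {u u' : Module.End R (MvPolynomial (Fin N × Fin N) R)}
  {v v' : Module.End R (MvPolynomial (Fin N) R)}

theorem smodEq_map (h : IsRadialPart u v) {P Q} (hPQ : P ≡ Q [SMOD conjBoundaries R (Fin N)]) :
    u P ≡ u Q [SMOD conjBoundaries R (Fin N)] := by
  rw [SModEq.sub_mem] at hPQ ⊢
  rw [← map_sub]
  exact h.map_mem hPQ

theorem mul (h : IsRadialPart u v) (h' : IsRadialPart u' v') :
    IsRadialPart (u * u') (v * v') where
  map_mem hP := h.map_mem (h'.map_mem hP)
  map_diagRename p := (h.smodEq_map (h'.map_diagRename p)).trans (h.map_diagRename (v' p))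

theorem sub (h : IsRadialPart u v) (h' : IsRadialPart u' v') :
    IsRadialPart (u - u') (v - v') where
  map_mem hP := sub_mem (h.map_mem hP) (h'.map_mem hP)
  map_diagRename p := by
    simpa using (h.map_diagRename p).sub (h'.map_diagRename p)

theorem ad_pow (h : IsRadialPart u v) (h' : IsRadialPart u' v') (k : ℕ) :
    IsRadialPart ((LieAlgebra.ad R _ u ^ k) u') ((LieAlgebra.ad R _ v ^ k) v') := by
  induction k with
  | zero => exact h'
  | succ k ih =>
    rw [pow_succ', pow_succ', Module.End.mul_apply, Module.End.mul_apply, LieAlgebra.ad_apply,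
      LieAlgebra.ad_apply, Ring.lie_def, Ring.lie_def]
    exact (h.mul ih).sub (ih.mul h)

end IsRadialPart

theorem isRadialPart_pderivTracePow (k : ℕ) :
    IsRadialPart (pderivTracePow R (Fin N) k) (constDiffOp (psum (Fin N) R k)) where
  map_mem := map_mem_conjBoundaries (commute_pderivTracePow_conjDerivation k)
  map_diagRename p := by
    rw [pderivTracePow_diagRename, ← Module.End.mul_apply, ← map_mul, mul_comm, map_mul,
      Module.End.mul_apply]

theorem commute_lmul_trace_pow_conjDerivation {n : Type*} [Fintype n] [DecidableEq n] (k : ℕ)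
    (Y : Matrix n n R) :
    Commute (Algebra.lmul R _ (mvPolynomialX n n R ^ k).trace) (conjDerivation Y).toLinearMap := by
  have h := lie_lmul_derivation (mvPolynomialX n n R ^ k).trace (conjDerivation Y)
  rw [derivation_trace_pow_eq_zero (mvPolynomialX_map_conjDerivation Y), neg_zero, map_zero] at h
  exact commute_iff_lie_eq.2 h

theorem isRadialPart_sum_sq :
    IsRadialPart (Algebra.lmul R _ (mvPolynomialX (Fin N) (Fin N) R ^ 2).trace)
      (Algebra.lmul R _ (∑ i, X i ^ 2)) where
  map_mem := map_mem_conjBoundaries (commute_lmul_trace_pow_conjDerivation 2)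
  map_diagRename p := by
    have pair {t : Fin N × Fin N} (ht : t ∈ ltPairs N) :
        X (t.2, t.1) * X (t.1, t.2) * diagRename (constDiffOp (vandermondePoly R N) p) ≡
          diagRename ((X t.2 - X t.1) * constDiffOp (vandermondeErase R t) p)
          [SMOD conjBoundaries R (Fin N)] := by
      rw [SModEq.sub_mem, constDiffOp_vandermondePoly_eq_erase ht]
      exact mul_diagRename_sub_mem_conjBoundaries _ _ _
    calc (mvPolynomialX (Fin N) (Fin N) R ^ 2).trace *
          diagRename (constDiffOp (vandermondePoly R N) p)
      _ = diagRename ((∑ i, X i ^ 2) * constDiffOp (vandermondePoly R N) p) +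
          (2 : R) • ∑ t ∈ ltPairs N, X (t.2, t.1) * X (t.1, t.2) *
            diagRename (constDiffOp (vandermondePoly R N) p) := by
        simp [trace_mvPolynomialX_sq, add_mul, Finset.sum_mul, Finset.mul_sum, mul_assoc,
          diagRename_X, two_smul, two_mul, Finset.sum_add_distrib]
      _ ≡ diagRename ((∑ i, X i ^ 2) * constDiffOp (vandermondePoly R N) p) +
          (2 : R) • ∑ t ∈ ltPairs N, diagRename
            ((X t.2 - X t.1) * constDiffOp (vandermondeErase R t) p)
          [SMOD conjBoundaries R (Fin N)] :=
        SModEq.rfl.add ((SModEq.sum fun _ ht ↦ pair ht).smul 2)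
      _ = diagRename (constDiffOp (vandermondePoly R N) ((∑ i, X i ^ 2) * p)) := by
        rw [constDiffOp_vandermondePoly_sum_sq_mul, map_add]
        simp [two_smul, two_mul]

theorem ad_lmul_trace_sq_pow_pderivTracePow {n : Type*} [Fintype n] [DecidableEq n] (k : ℕ) :
    (LieAlgebra.ad R _ (Algebra.lmul R _ (mvPolynomialX n n R ^ 2).trace) ^ k)
        (pderivTracePow R n k) =
      (k.factorial * (-2) ^ k : R) • Algebra.lmul R _ (mvPolynomialX n n R ^ k).trace := by
  have gradient : (pderivMatrix R n).map (· (mvPolynomialX n n R ^ 2).trace) =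
      (2 : R) • mvPolynomialX n n R := by
    ext1 i j
    simp only [pow_two, trace, diag_apply, Matrix.mul_apply, pderivMatrix, map_apply, of_apply,
      map_sum, Derivation.leibniz, mvPolynomialX_apply, pderiv_X, Pi.single_apply, Prod.ext_iff]
    simp [ite_and, Finset.sum_add_distrib, two_smul]
  rw [pderivTracePow, ad_lmul_pow_trace_pow, gradient, smul_smul, smul_pow, trace_smul, map_smul,
    ← Nat.cast_smul_eq_nsmul R, smul_smul]
  norm_num

theorem ad_lmul_sum_sq_pow_constDiffOp_psum {n : Type*} [Fintype n] (k : ℕ) :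
    (LieAlgebra.ad R _ (Algebra.lmul R (MvPolynomial n R) (∑ i : n, X i ^ 2)) ^ k)
        (constDiffOp (psum n R k)) =
      (k.factorial * (-2) ^ k : R) • Algebra.lmul R _ (psum n R k) := by
  classical
  have constDiffOp_psum : constDiffOp (psum n R k) = (((diagonal (pderiv (R := R) (σ := n))).map
      fun δ ↦ (δ : Module.End R (MvPolynomial n R))) ^ k).trace := by
    rw [diagonal_map (by simp), diagonal_pow, trace_diagonal, psum, map_sum]
    simp
  have gradient : (diagonal (pderiv (R := R))).map (· (∑ i : n, X i ^ 2)) =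
      (2 : R) • diagonal X := by
    ext1 i j
    by_cases h : i = j
    · simp [h, pderiv_X, Pi.single_apply, two_smul, Finset.sum_add_distrib]
    · simp [h]
  rw [constDiffOp_psum, ad_lmul_pow_trace_pow, gradient, smul_smul, smul_pow, trace_smul,
    map_smul, ← Nat.cast_smul_eq_nsmul R, smul_smul, diagonal_pow, trace_diagonal]
  norm_num [psum]

theorem isRadialPart_lmul_psum {K : Type*} [Field K] [CharZero K] (k : ℕ) :
    IsRadialPart (Algebra.lmul K _ (mvPolynomialX (Fin N) (Fin N) K ^ k).trace)
      (Algebra.lmul K _ (psum (Fin N) K k)) where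
  map_mem := map_mem_conjBoundaries (commute_lmul_trace_pow_conjDerivation k)
  map_diagRename p := by
    have h := (isRadialPart_sum_sq.ad_pow
      (isRadialPart_pderivTracePow (R := K) (N := N) k) k).map_diagRename p
    have unit : (k.factorial * (-2) ^ k : K) ≠ 0 :=
      mul_ne_zero (Nat.cast_ne_zero.2 k.factorial_ne_zero) (pow_ne_zero k (by norm_num))
    rw [ad_lmul_trace_sq_pow_pderivTracePow, ad_lmul_sum_sq_pow_constDiffOp_psum,
      SModEq.sub_mem] at h
    rw [SModEq.sub_mem, ← Submodule.smul_mem_iff _ unit]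
    simpa [smul_sub] using h

end HarishChandra

section SymmetricPolynomials

open MvPolynomial

variable {K σ : Type*} [Field K] [CharZero K] [Fintype σ] {S : Subalgebra K (MvPolynomial σ K)}

theorem esymm_mem_of_psum_mem (hS : ∀ k, psum σ K k ∈ S) (k : ℕ) : esymm σ K k ∈ S := by
  classical
  induction k using Nat.strong_induction_on with
  | _ k ih =>
    obtain rfl | hk := eq_or_ne k 0
    · simp [one_mem]
    have newton : (k : K) • esymm σ K k ∈ S := by
      rw [Nat.cast_smul_eq_nsmul, nsmul_eq_mul, mul_esymm_eq_sum]
      have neg_one_mem : (-1 : MvPolynomial σ K) ∈ S := neg_mem (one_mem S)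
      exact mul_mem (pow_mem neg_one_mem _) (sum_mem fun a ha ↦ mul_mem
        (mul_mem (pow_mem neg_one_mem _) (ih a.1 (Finset.mem_filter.1 ha).2)) (hS a.2))
    exact (Submodule.smul_mem_iff S.toSubmodule (Nat.cast_ne_zero.2 hk)).1 newton

theorem isSymmetric_mem_of_psum_mem (hS : ∀ k, psum σ K k ∈ S) {f : MvPolynomial σ K}
    (hf : f.IsSymmetric) : f ∈ S := by
  obtain ⟨g, hg⟩ := esymmAlgHom_surjective K (le_refl (Fintype.card σ)) ⟨f, hf⟩
  have eval_esymm : f = aeval (fun i : Fin (Fintype.card σ) ↦ esymm σ K (i + 1)) g := by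
    rw [← esymmAlgHom_apply, hg]
  rw [eval_esymm, Subalgebra.mvPolynomial_aeval_coe S fun i ↦ ⟨_, esymm_mem_of_psum_mem hS _⟩]
  exact Subtype.coe_prop _

end SymmetricPolynomials

section Antisymmetrization

open MvPolynomial

variable {R : Type*} [CommRing R]

/-- The antisymmetrization `∑ σ, sign σ • σ p` of a polynomial. -/
noncomputable def antisymmetrize {n : Type*} [Fintype n] [DecidableEq n] (p : MvPolynomial n R) :
    MvPolynomial n R :=
  ∑ σ : Equiv.Perm n, Equiv.Perm.sign σ • rename σ p

theorem rename_antisymmetrize {n : Type*} [Fintype n] [DecidableEq n] (τ : Equiv.Perm n)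
    (p : MvPolynomial n R) :
    rename τ (antisymmetrize p) = Equiv.Perm.sign τ • antisymmetrize p := by
  simp only [antisymmetrize, map_sum, Finset.smul_sum, smul_smul]
  refine Fintype.sum_equiv (Equiv.mulLeft τ) _ _ fun σ ↦ ?_
  simp only [Units.smul_def, map_zsmul, rename_rename, Equiv.coe_mulLeft, Equiv.Perm.coe_mul,
    map_mul, ← mul_assoc, Int.units_mul_self, one_mul]

variable {N : ℕ}

theorem rename_vandermondePoly (σ : Equiv.Perm (Fin N)) :
    rename σ (vandermondePoly R N) = Equiv.Perm.sign σ • vandermondePoly R N := by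
  have rows : (rename σ : MvPolynomial (Fin N) R →ₐ[R] _).mapMatrix (Matrix.vandermonde X) =
      (Matrix.vandermonde X).submatrix σ id := by
    ext1 i j
    simp [Matrix.vandermonde]
  rw [vandermondePoly_eq_det, AlgHom.map_det, rows, Matrix.det_permute, Units.smul_def,
    zsmul_eq_mul]

theorem isSymmetric_antisymmetrize_mul_vandermondePoly (p : MvPolynomial (Fin N) R) :
    (antisymmetrize p * vandermondePoly R N).IsSymmetric := fun σ ↦ by
  rw [map_mul, rename_antisymmetrize, rename_vandermondePoly, smul_mul_smul_comm,
    Int.units_mul_self, one_smul]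

/-- The exponents `(0, 1, …, N - 1)` of the diagonal monomial of the Vandermonde determinant. -/
noncomputable def staircase (N : ℕ) : Fin N →₀ ℕ := Finsupp.equivFunOnFinite.symm Fin.val

theorem antisymmetrize_monomial_staircase :
    antisymmetrize (monomial (staircase N) (1 : R)) = vandermondePoly R N := by
  rw [vandermondePoly_eq_det, Matrix.det_apply, antisymmetrize]
  refine Finset.sum_congr rfl fun σ _ ↦ ?_
  rw [monomial_eq, Finsupp.prod_fintype _ _ fun i ↦ pow_zero _]
  simp [staircase]

end Antisymmetrization

section StaircaseMonomial

open MvPolynomial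

variable {R σ : Type*} [CommRing R]

theorem constDiffOp_X_pow_monomial (i : σ) (k : ℕ) (s : σ →₀ ℕ) (a : R) :
    constDiffOp (X i ^ k) (monomial s a) =
      monomial (s - Finsupp.single i k) (a * (s i).descFactorial k) := by
  induction k with
  | zero => simp
  | succ k ih =>
    rw [pow_succ', map_mul, Module.End.mul_apply, ih, constDiffOp_X_apply, pderiv_monomial,
      tsub_tsub, ← Finsupp.single_add, Nat.descFactorial_succ, Finsupp.tsub_apply,
      Finsupp.single_eq_same, Nat.cast_mul, mul_assoc, mul_comm (Nat.cast _)]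

theorem constDiffOp_monomial_monomial (t s : σ →₀ ℕ) (a : R) :
    constDiffOp (monomial t 1) (monomial s a) =
      monomial (s - t) (a * t.prod fun i k ↦ ((s i).descFactorial k : R)) := by
  classical
  induction t using Finsupp.induction with
  | zero => simp
  | single_add i k t hi _ ih =>
    have hti : t i = 0 := Finsupp.notMem_support_iff.1 hi
    have split : monomial (Finsupp.single i k + t) (1 : R) = X i ^ k * monomial t 1 := by
      rw [X_pow_eq_monomial, monomial_mul, one_mul]
    have disjoint : Disjoint (Finsupp.single i k).support t.support :=
      Finset.disjoint_of_subset_left Finsupp.support_single_subset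
        (Finset.disjoint_singleton_left.2 hi)
    rw [split, map_mul, Module.End.mul_apply, ih, constDiffOp_X_pow_monomial, tsub_tsub, add_comm t,
      Finsupp.prod_add_index_of_disjoint disjoint, Finsupp.prod_single_index (by simp)]
    simp [hti, mul_assoc, mul_comm (Nat.cast _)]

theorem perm_eq_one_of_apply_le {n : Type*} [PartialOrder n] [WellFoundedLT n]
    {τ : Equiv.Perm n} (h : ∀ i, τ i ≤ i) : τ = 1 := by
  ext i
  induction i using WellFoundedLT.induction with
  | _ i ih =>
    by_contra hne
    exact hne (τ.injective (ih _ ((h i).lt_of_ne hne)))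

theorem constDiffOp_vandermondePoly_monomial_staircase (N : ℕ) :
    constDiffOp (vandermondePoly R N) (monomial (staircase N) 1) =
      C (∏ i : Fin N, ((i : ℕ).factorial : R)) := by
  rw [← antisymmetrize_monomial_staircase, antisymmetrize, map_sum, LinearMap.sum_apply,
    Finset.sum_eq_single 1]
  · simp [constDiffOp_monomial_monomial, Finsupp.prod_fintype, staircase, Nat.descFactorial_self]
  · intro τ _ hτ
    obtain ⟨i, hi⟩ : ∃ i, i < τ.symm i := by
      by_contra! h
      exact hτ (inv_eq_one.1 (perm_eq_one_of_apply_le h))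
    rw [rename_monomial, Units.smul_def, map_zsmul, LinearMap.smul_apply,
      constDiffOp_monomial_monomial, Finsupp.prod_fintype _ _ fun _ ↦ by simp,
      Finset.prod_eq_zero (Finset.mem_univ i)]
    · simp
    · rw [← Finsupp.equivMapDomain_eq_mapDomain, Finsupp.equivMapDomain_apply]
      simp [staircase, Nat.descFactorial_of_lt (Fin.lt_def.1 hi)]
  · simp

end StaircaseMonomial

section OrbitFunctional

open MvPolynomial

variable {R : Type*} [CommRing R] {N : ℕ}

theorem rename_constDiffOp {σ τ : Type*} (e : σ ≃ τ) (f p : MvPolynomial σ R) :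
    rename e (constDiffOp f p) = constDiffOp (rename e f) (rename e p) := by
  induction f using MvPolynomial.induction_on generalizing p with
  | C a => simp [← algebraMap_eq]
  | add f g hf hg => simp only [map_add, LinearMap.add_apply, hf, hg]
  | mul_X f i hf =>
    rw [map_mul, map_mul, map_mul, rename_X, Module.End.mul_apply, Module.End.mul_apply, hf,
      constDiffOp_X_apply, constDiffOp_X_apply, pderiv_rename e.injective]

theorem rename_diagRename {σ τ : Type*} (e : σ → τ) (p : MvPolynomial σ R) :
    rename (Prod.map e e) (diagRename p) = diagRename (rename e p) := by
  rw [diagRename, diagRename, rename_rename, rename_rename]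
  rfl

/-- A linear functional on polynomial functions of a matrix which behaves like integration over the
conjugation orbit of a matrix with eigenvalues `b`. -/
structure IsOrbitFunctional (b : Fin N → R) (Φ : MvPolynomial (Fin N × Fin N) R →ₗ[R] R) :
    Prop where
  map_conjDerivation (Y P) : Φ (conjDerivation Y P) = 0
  map_trace_pow_mul (k : ℕ) (P) :
    Φ ((Matrix.mvPolynomialX (Fin N) (Fin N) R ^ k).trace * P) = (∑ i, b i ^ k) * Φ P
  map_rename (σ : Equiv.Perm (Fin N)) (P) : Φ (rename (Prod.map σ σ) P) = Φ P

/-- The functional `q ↦ Φ (Δ(∂) q)` on polynomials in the diagonal entries. -/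
noncomputable def radialFunctional (Φ : MvPolynomial (Fin N × Fin N) R →ₗ[R] R) :
    MvPolynomial (Fin N) R →ₗ[R] R :=
  Φ ∘ₗ diagRename.toLinearMap ∘ₗ constDiffOp (vandermondePoly R N)

theorem radialFunctional_apply (Φ : MvPolynomial (Fin N × Fin N) R →ₗ[R] R)
    (q : MvPolynomial (Fin N) R) :
    radialFunctional Φ q = Φ (diagRename (constDiffOp (vandermondePoly R N) q)) := rfl

namespace IsOrbitFunctional

variable {b : Fin N → R} {Φ : MvPolynomial (Fin N × Fin N) R →ₗ[R] R}

theorem map_eq_of_smodEq (h : IsOrbitFunctional b Φ) {P Q : MvPolynomial (Fin N × Fin N) R}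
    (hPQ : P ≡ Q [SMOD conjBoundaries R (Fin N)]) : Φ P = Φ Q := by
  have vanish : conjBoundaries R (Fin N) ≤ LinearMap.ker Φ := by
    rw [conjBoundaries, iSup_le_iff]
    rintro Y _ ⟨P, rfl⟩
    exact h.map_conjDerivation Y P
  rw [← sub_eq_zero, ← map_sub]
  exact vanish (SModEq.sub_mem.1 hPQ)

theorem radialFunctional_rename (h : IsOrbitFunctional b Φ) (σ : Equiv.Perm (Fin N))
    (q : MvPolynomial (Fin N) R) :
    radialFunctional Φ (rename σ q) = Equiv.Perm.sign σ • radialFunctional Φ q := by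
  have vandermonde : vandermondePoly R N =
      Equiv.Perm.sign σ • rename σ (vandermondePoly R N) := by
    rw [rename_vandermondePoly, smul_smul, Int.units_mul_self, one_smul]
  rw [radialFunctional_apply, vandermonde, Units.smul_def, map_zsmul, LinearMap.smul_apply,
    ← rename_constDiffOp, map_zsmul, ← rename_diagRename, map_zsmul, h.map_rename, Units.smul_def,
    radialFunctional_apply]

theorem radialFunctional_antisymmetrize (h : IsOrbitFunctional b Φ) (q : MvPolynomial (Fin N) R) :
    radialFunctional Φ (antisymmetrize q) = N.factorial * radialFunctional Φ q := by
  rw [antisymmetrize, map_sum]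
  simp only [Units.smul_def, map_zsmul, h.radialFunctional_rename, smul_smul]
  simp [← Units.val_mul, Fintype.card_perm]

variable {K : Type*} [Field K] [CharZero K] {b : Fin N → K}
  {Φ : MvPolynomial (Fin N × Fin N) K →ₗ[K] K}

theorem radialFunctional_symm_mul (h : IsOrbitFunctional b Φ) {f : MvPolynomial (Fin N) K}
    (hf : f.IsSymmetric) (q : MvPolynomial (Fin N) K) :
    radialFunctional Φ (f * q) = eval b f * radialFunctional Φ q := by
  let S : Subalgebra K (MvPolynomial (Fin N) K) :=
    { carrier := {f | ∀ q, radialFunctional Φ (f * q) = eval b f * radialFunctional Φ q}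
      mul_mem' {f g} hf hg q := by rw [mul_assoc, hf, hg, map_mul, mul_assoc]
      add_mem' {f g} hf hg q := by rw [add_mul, map_add, hf, hg, map_add, add_mul]
      algebraMap_mem' a q := by
        rw [← Algebra.smul_def, map_smul, algebraMap_eq, eval_C, smul_eq_mul] }
  have psum_mem (k : ℕ) : psum (Fin N) K k ∈ S := fun q ↦ by
    calc radialFunctional Φ (psum (Fin N) K k * q)
      _ = Φ ((Matrix.mvPolynomialX (Fin N) (Fin N) K ^ k).trace *
          diagRename (constDiffOp (vandermondePoly K N) q)) :=
        (h.map_eq_of_smodEq ((isRadialPart_lmul_psum k).map_diagRename q)).symm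
      _ = eval b (psum (Fin N) K k) * radialFunctional Φ q := by
        simp [h.map_trace_pow_mul, radialFunctional_apply, psum]
  exact isSymmetric_mem_of_psum_mem psum_mem hf q

theorem radialFunctional_mul_prod_sub (h : IsOrbitFunctional b Φ) (hb : Function.Injective b)
    (q : MvPolynomial (Fin N) K) :
    radialFunctional Φ q * ∏ t ∈ ltPairs N, (b t.2 - b t.1) =
      (∏ i : Fin N, ((i : ℕ).factorial : K)) * Φ 1 * eval b (antisymmetrize q) := by
  have eval_vandermonde : eval b (vandermondePoly K N) = ∏ t ∈ ltPairs N, (b t.2 - b t.1) := by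
    simp [vandermondePoly]
  have vandermonde_ne : eval b (vandermondePoly K N) ≠ 0 := by
    rw [eval_vandermonde, Finset.prod_ne_zero_iff]
    exact fun t ht ↦ sub_ne_zero.2 (hb.ne (Finset.mem_filter.1 ht).2.ne')
  have staircase_value : radialFunctional Φ (monomial (staircase N) 1) =
      (∏ i : Fin N, ((i : ℕ).factorial : K)) * Φ 1 := by
    rw [radialFunctional_apply, constDiffOp_vandermondePoly_monomial_staircase, ← algebraMap_eq,
      AlgHom.commutes, Algebra.algebraMap_eq_smul_one, map_smul, smul_eq_mul]
  have vandermonde_sq : (vandermondePoly K N * vandermondePoly K N).IsSymmetric := by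
    simpa [antisymmetrize_monomial_staircase] using
      isSymmetric_antisymmetrize_mul_vandermondePoly (monomial (staircase N) (1 : K))
  have factorial_ne : (N.factorial : K) ≠ 0 := Nat.cast_ne_zero.2 N.factorial_ne_zero
  rw [← eval_vandermonde, ← staircase_value]
  refine mul_left_cancel₀ (mul_ne_zero factorial_ne vandermonde_ne) ?_
  calc N.factorial * eval b (vandermondePoly K N) *
        (radialFunctional Φ q * eval b (vandermondePoly K N))
    _ = eval b (vandermondePoly K N * vandermondePoly K N) *
        radialFunctional Φ (antisymmetrize q) := by
      rw [h.radialFunctional_antisymmetrize, map_mul]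
      ring
    _ = radialFunctional Φ (antisymmetrize q * vandermondePoly K N * vandermondePoly K N) := by
      rw [← h.radialFunctional_symm_mul vandermonde_sq, mul_comm, mul_assoc]
    _ = N.factorial * eval b (vandermondePoly K N) *
        (radialFunctional Φ (monomial (staircase N) 1) * eval b (antisymmetrize q)) := by
      nth_rw 2 [← antisymmetrize_monomial_staircase]
      rw [h.radialFunctional_symm_mul (isSymmetric_antisymmetrize_mul_vandermondePoly q),
        h.radialFunctional_antisymmetrize, map_mul]
      ring

end IsOrbitFunctional

end OrbitFunctional

section ExponentialSeries

open MvPolynomial Finset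

variable {N : ℕ}

theorem radialFunctional_linear_pow {R : Type*} [CommRing R]
    (Φ : MvPolynomial (Fin N × Fin N) R →ₗ[R] R) (a : Fin N → R) (n : ℕ) :
    radialFunctional Φ ((∑ i, C (a i) * X i) ^ n) =
      n.descFactorial #(ltPairs N) * (∏ t ∈ ltPairs N, (a t.2 - a t.1)) *
        Φ ((∑ i, C (a i) * X (i, i)) ^ (n - #(ltPairs N))) := by
  have diagRename_linear : diagRename (∑ i, C (a i) * X i) = ∑ i, C (a i) * X (i, i) := by
    simp [diagRename]
  rw [radialFunctional_apply, constDiffOp_vandermondePoly_linear_pow, map_smul, map_smul,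
    map_pow, diagRename_linear, smul_eq_mul]

theorem hasSum_radialFunctional_linear_pow {K : Type*} [Field K] [CharZero K] [TopologicalSpace K]
    [IsTopologicalRing K] {Φ : MvPolynomial (Fin N × Fin N) K →ₗ[K] K} {a : Fin N → K} {F : K}
    (hF : HasSum (fun n : ℕ ↦ Φ ((∑ i, C (a i) * X (i, i)) ^ n) / n.factorial) F) :
    HasSum (fun n : ℕ ↦ radialFunctional Φ ((∑ i, C (a i) * X i) ^ n) / n.factorial)
      ((∏ t ∈ ltPairs N, (a t.2 - a t.1)) * F) := by
  have head : ∑ n ∈ range #(ltPairs N),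
      radialFunctional Φ ((∑ i, C (a i) * X i) ^ n) / (n.factorial : K) = 0 :=
    sum_eq_zero fun n hn ↦ by
      simp [radialFunctional_linear_pow, Nat.descFactorial_of_lt (mem_range.1 hn)]
  have tail (n : ℕ) :
      radialFunctional Φ ((∑ i, C (a i) * X i) ^ (n + #(ltPairs N))) /
          ((n + #(ltPairs N)).factorial : K) =
        (∏ t ∈ ltPairs N, (a t.2 - a t.1)) *
          (Φ ((∑ i, C (a i) * X (i, i)) ^ n) / n.factorial) := by
    have factorial_ne (k : ℕ) : (k.factorial : K) ≠ 0 := Nat.cast_ne_zero.2 k.factorial_ne_zero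
    have factorial_mul := Nat.factorial_mul_descFactorial (Nat.le_add_left #(ltPairs N) n)
    rw [Nat.add_sub_cancel] at factorial_mul
    rw [radialFunctional_linear_pow, Nat.add_sub_cancel, div_eq_iff (factorial_ne _),
      ← factorial_mul, Nat.cast_mul]
    field_simp [factorial_ne n]
  rw [← hasSum_nat_add_iff' #(ltPairs N), head, sub_zero]
  simp_rw [tail]
  exact hF.mul_left _

theorem hasSum_eval_antisymmetrize_linear_pow (a b : Fin N → ℂ) :
    HasSum (fun n : ℕ ↦ eval b (antisymmetrize ((∑ i, C (a i) * X i) ^ n)) / n.factorial)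
      (Matrix.of fun i j ↦ Complex.exp (a i * b j)).det := by
  have expand (n : ℕ) : eval b (antisymmetrize ((∑ i, C (a i) * X i) ^ n)) / (n.factorial : ℂ) =
      ∑ σ : Equiv.Perm (Fin N), Equiv.Perm.sign σ •
        ((∑ i, a i * b (σ i)) ^ n / (n.factorial : ℂ)) := by
    simp [antisymmetrize, sum_div, Units.smul_def, mul_div_assoc]
  have exp_series (σ : Equiv.Perm (Fin N)) :
      HasSum (fun n : ℕ ↦ (∑ i, a i * b (σ i)) ^ n / (n.factorial : ℂ))
        (∏ i, Complex.exp (a i * b (σ i))) := by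
    rw [← Complex.exp_sum, Complex.exp_eq_exp_ℂ]
    exact NormedSpace.expSeries_div_hasSum_exp _
  simp_rw [expand]
  rw [← Matrix.det_transpose, Matrix.det_apply]
  exact hasSum_sum fun σ _ ↦ (exp_series σ).const_smul _

theorem IsOrbitFunctional.exp_mul_prod_sub {b : Fin N → ℂ}
    {Φ : MvPolynomial (Fin N × Fin N) ℂ →ₗ[ℂ] ℂ} (h : IsOrbitFunctional b Φ) {a : Fin N → ℂ} {F : ℂ}
    (hF : HasSum (fun n : ℕ ↦ Φ ((∑ i, C (a i) * X (i, i)) ^ n) / n.factorial) F) :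
    F * (∏ t ∈ ltPairs N, (a t.2 - a t.1)) * ∏ t ∈ ltPairs N, (b t.2 - b t.1) =
      (∏ i : Fin N, ((i : ℕ).factorial : ℂ)) * Φ 1 *
        (Matrix.of fun i j ↦ Complex.exp (a i * b j)).det := by
  by_cases hb : Function.Injective b
  · have terms (n : ℕ) : radialFunctional Φ ((∑ i, C (a i) * X i) ^ n) / (n.factorial : ℂ) *
          ∏ t ∈ ltPairs N, (b t.2 - b t.1) = (∏ i : Fin N, ((i : ℕ).factorial : ℂ)) * Φ 1 *
        (eval b (antisymmetrize ((∑ i, C (a i) * X i) ^ n)) / (n.factorial : ℂ)) := by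
      rw [div_mul_eq_mul_div, h.radialFunctional_mul_prod_sub hb, mul_div_assoc]
    have lhs := (hasSum_radialFunctional_linear_pow hF).mul_right
      (∏ t ∈ ltPairs N, (b t.2 - b t.1))
    simp_rw [terms] at lhs
    rw [mul_comm F]
    exact lhs.unique ((hasSum_eval_antisymmetrize_linear_pow a b).mul_left _)
  · obtain ⟨i, j, hij, hne⟩ := Function.not_injective_iff.1 hb
    wlog hlt : i < j generalizing i j
    · exact this j i hij.symm hne.symm (hne.lt_or_gt.resolve_left hlt)
    have vanish : ∏ t ∈ ltPairs N, (b t.2 - b t.1) = 0 :=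
      prod_eq_zero (i := (i, j)) (by simpa [ltPairs] using hlt) (by simp [hij])
    rw [Matrix.det_zero_of_column_eq hne fun k ↦ by simp [hij], vanish, mul_zero, mul_zero]

end ExponentialSeries

section UnitaryConjugation

open MvPolynomial Matrix

instance matrixBorelSpace {m n α : Type*} [TopologicalSpace α] : BorelSpace (Matrix m n α) := ⟨rfl⟩

variable {n : Type*} [Fintype n] [DecidableEq n]

instance compactSpace_unitaryGroup {𝕜 : Type*} [RCLike 𝕜] : CompactSpace (unitaryGroup n 𝕜) := by
  have entries_compact : IsCompact
      (Set.univ.pi fun _ : n ↦ Set.univ.pi fun _ : n ↦ Metric.closedBall (0 : 𝕜) 1) :=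
    isCompact_univ_pi fun _ ↦ isCompact_univ_pi fun _ ↦ isCompact_closedBall _ _
  refine isCompact_iff_compactSpace.1 (entries_compact.of_isClosed_subset
    (isClosed_unitary (R := Matrix n n 𝕜)) fun U hU i _ j _ ↦ ?_)
  simpa using entry_norm_bound_of_unitary hU i j

/-- Evaluation of polynomials in the matrix entries at the point `U A U⋆`. -/
noncomputable def evalOrbit (A : Matrix n n ℂ) (U : unitaryGroup n ℂ) :
    MvPolynomial (n × n) ℂ →+* ℂ :=
  eval fun p ↦ Unitary.conjStarAlgAut ℂ _ U A p.1 p.2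

theorem continuous_evalOrbit (A : Matrix n n ℂ) (P : MvPolynomial (n × n) ℂ) :
    Continuous fun U ↦ evalOrbit A U P := by
  simp only [evalOrbit, Unitary.conjStarAlgAut_apply]
  exact (continuous_eval P).comp (by fun_prop)

theorem evalOrbit_mul (A : Matrix n n ℂ) (V U : unitaryGroup n ℂ) :
    evalOrbit A (V * U) = evalOrbit (Unitary.conjStarAlgAut ℂ _ U A) V := by
  rw [evalOrbit, map_mul]
  rfl

theorem evalOrbit_trace_pow (A : Matrix n n ℂ) (U : unitaryGroup n ℂ) (k : ℕ) :
    evalOrbit A U (mvPolynomialX n n ℂ ^ k).trace = (A ^ k).trace := by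
  rw [AddMonoidHom.map_trace, ← RingHom.mapMatrix_apply, map_pow, evalOrbit,
    mvPolynomialX_mapMatrix_eval, ← map_pow, Unitary.conjStarAlgAut_apply, trace_mul_comm,
    ← Matrix.mul_assoc]
  simp

theorem permMatrix_mem_unitaryGroup (σ : Equiv.Perm n) : σ.permMatrix ℂ ∈ unitaryGroup n ℂ := by
  rw [mem_unitaryGroup_iff, star_eq_conjTranspose, conjTranspose_permMatrix, ← permMatrix_mul,
    inv_mul_cancel, permMatrix_one]

theorem evalOrbit_rename (A : Matrix n n ℂ) (σ : Equiv.Perm n) (U : unitaryGroup n ℂ)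
    (P : MvPolynomial (n × n) ℂ) :
    evalOrbit A U (rename (Prod.map σ σ) P) =
      evalOrbit A (⟨σ.permMatrix ℂ, permMatrix_mem_unitaryGroup σ⟩ * U) P := by
  rw [evalOrbit_mul, evalOrbit, evalOrbit, eval_rename]
  congr 2
  ext p
  simp [Unitary.conjStarAlgAut_apply, star_eq_conjTranspose, conjTranspose_permMatrix,
    Equiv.Perm.inv_def, Equiv.Perm.permMatrix, PEquiv.toMatrix_toPEquiv_mul,
    PEquiv.mul_toMatrix_toPEquiv]

end UnitaryConjugation

section InfinitesimalConjugation

open MvPolynomial NormedSpace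

theorem hasDerivAt_exp_mul_mul_exp_neg {A : Type*} [NormedRing A] [NormedAlgebra ℝ A]
    [CompleteSpace A] (y x : A) (t : ℝ) :
    HasDerivAt (fun t : ℝ ↦ exp (t • y) * x * exp (-(t • y)))
      (y * (exp (t • y) * x * exp (-(t • y))) - exp (t • y) * x * exp (-(t • y)) * y) t := by
  have left := (hasDerivAt_exp_smul_const' y t).mul_const x
  have right := hasDerivAt_exp_smul_const (-y) t
  simp only [smul_neg] at right
  exact (left.mul right).congr_deriv (by noncomm_ring)

theorem hasDerivAt_eval_of_derivation {σ : Type*}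
    (D : Derivation ℂ (MvPolynomial σ ℂ) (MvPolynomial σ ℂ))
    {x : ℝ → σ → ℂ} {t : ℝ} (hx : ∀ i, HasDerivAt (x · i) (eval (x t) (D (X i))) t)
    (P : MvPolynomial σ ℂ) :
    HasDerivAt (fun t ↦ eval (x t) P) (eval (x t) (D P)) t := by
  induction P using MvPolynomial.induction_on with
  | C a => simpa [derivation_C] using hasDerivAt_const t a
  | add p q hp hq => simpa using hp.fun_add hq
  | mul_X p i hp => simpa [add_comm, mul_comm] using hp.fun_mul (hx i)

variable {n : Type*} [Fintype n]

theorem eval_conjDerivation_X (Y M : Matrix n n ℂ) (i j : n) :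
    eval (fun p ↦ M p.1 p.2) (conjDerivation Y (X (i, j))) = (Y * M - M * Y) i j := by
  simp [conjDerivation_X, Matrix.mul_apply, mul_comm]

variable [DecidableEq n]

open scoped Matrix.Norms.L2Operator in
theorem exists_unitary_curve {Y : Matrix n n ℂ} (hY : Y ∈ skewAdjoint (Matrix n n ℂ)) :
    ∃ V : ℝ → Matrix.unitaryGroup n ℂ, ∀ A P t,
      HasDerivAt (fun t ↦ evalOrbit A (V t) P) (evalOrbit A (V t) (conjDerivation Y P)) t := by
  let _ : NormedAlgebra ℚ (Matrix n n ℂ) := .restrictScalars ℚ ℂ _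
  have smul_mem (t : ℝ) : t • Y ∈ skewAdjoint (Matrix n n ℂ) := skewAdjoint.smul_mem t hY
  let V (t : ℝ) : Matrix.unitaryGroup n ℂ :=
    ⟨exp (t • Y), exp_mem_unitary_of_mem_skewAdjoint (smul_mem t)⟩
  have conj_eq (A : Matrix n n ℂ) (t : ℝ) :
      Unitary.conjStarAlgAut ℂ _ (V t) A = exp (t • Y) * A * exp (-(t • Y)) := by
    rw [Unitary.conjStarAlgAut_apply, star_exp, skewAdjoint.mem_iff.1 (smul_mem t)]
  refine ⟨V, fun A P t ↦ hasDerivAt_eval_of_derivation _ (fun ⟨i, j⟩ ↦ ?_) P⟩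
  simp only [eval_conjDerivation_X, conj_eq]
  have := hasDerivAt_exp_mul_mul_exp_neg Y A t
  exact hasDerivAt_pi.1 (hasDerivAt_pi.1 this i) j

end InfinitesimalConjugation

section OrbitIntegral

open MvPolynomial Matrix

variable {n : Type*} [Fintype n] [DecidableEq n]

variable (m : Measure (unitaryGroup n ℂ))

theorem integrable_evalOrbit [IsFiniteMeasureOnCompacts m] (A : Matrix n n ℂ)
    (P : MvPolynomial (n × n) ℂ) : Integrable (fun U ↦ evalOrbit A U P) m :=
  (continuous_evalOrbit A P).integrable_of_hasCompactSupport (.of_compactSpace _)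

/-- The average of a polynomial in the matrix entries over the orbit `{U A U⋆}`. -/
noncomputable def orbitIntegral [IsFiniteMeasureOnCompacts m] (A : Matrix n n ℂ) :
    MvPolynomial (n × n) ℂ →ₗ[ℂ] ℂ where
  toFun P := ∫ U, evalOrbit A U P ∂m
  map_add' P Q := by
    simp only [map_add]
    exact integral_add (integrable_evalOrbit m A P) (integrable_evalOrbit m A Q)
  map_smul' c P := by
    simp only [evalOrbit, smul_eval, integral_const_mul, RingHom.id_apply, smul_eq_mul]

theorem orbitIntegral_apply [IsFiniteMeasureOnCompacts m] (A : Matrix n n ℂ)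
    (P : MvPolynomial (n × n) ℂ) : orbitIntegral m A P = ∫ U, evalOrbit A U P ∂m := rfl

theorem exists_norm_evalOrbit_le (A : Matrix n n ℂ) (P : MvPolynomial (n × n) ℂ) :
    ∃ M, ∀ U, ‖evalOrbit A U P‖ ≤ M := by
  obtain ⟨M, hM⟩ := isCompact_univ.exists_bound_of_continuousOn
    (continuous_evalOrbit A P).continuousOn
  exact ⟨M, fun U ↦ hM U trivial⟩

theorem integral_evalOrbit_mul_left [m.IsMulLeftInvariant] (A : Matrix n n ℂ)
    (P : MvPolynomial (n × n) ℂ) (V : unitaryGroup n ℂ) :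
    ∫ U, evalOrbit A (V * U) P ∂m = ∫ U, evalOrbit A U P ∂m :=
  integral_mul_left_eq_self (evalOrbit A · P) V

variable [IsFiniteMeasureOnCompacts m] [m.IsMulLeftInvariant]

theorem orbitIntegral_rename (A : Matrix n n ℂ) (σ : Equiv.Perm n) (P : MvPolynomial (n × n) ℂ) :
    orbitIntegral m A (rename (Prod.map σ σ) P) = orbitIntegral m A P := by
  simp only [orbitIntegral_apply, evalOrbit_rename, integral_evalOrbit_mul_left]

theorem orbitIntegral_conjDerivation_of_mem_skewAdjoint (A : Matrix n n ℂ) {Y : Matrix n n ℂ}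
    (hY : Y ∈ skewAdjoint (Matrix n n ℂ)) (P : MvPolynomial (n × n) ℂ) :
    orbitIntegral m A (conjDerivation Y P) = 0 := by
  obtain ⟨V, hasDerivAt_V⟩ := exists_unitary_curve hY
  obtain ⟨M, hM⟩ := exists_norm_evalOrbit_le A (conjDerivation Y P)
  have continuous_translate (t : ℝ) (Q) : Continuous fun U ↦ evalOrbit A (V t * U) Q :=
    (continuous_evalOrbit A Q).comp (continuous_const_mul (V t))
  have integrable_translate (t : ℝ) (Q) : Integrable (fun U ↦ evalOrbit A (V t * U) Q) m :=
    (continuous_translate t Q).integrable_of_hasCompactSupport (.of_compactSpace _)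
  have hasDerivAt_integral :=
    (hasDerivAt_integral_of_dominated_loc_of_deriv_le (μ := m) (x₀ := (0 : ℝ))
      (F := fun t U ↦ evalOrbit A (V t * U) P)
      (F' := fun t U ↦ evalOrbit A (V t * U) (conjDerivation Y P)) (bound := fun _ ↦ M)
      Filter.univ_mem (.of_forall fun t ↦ (integrable_translate t P).aestronglyMeasurable)
      (integrable_translate 0 P) (integrable_translate 0 _).aestronglyMeasurable
      (.of_forall fun U t _ ↦ hM _)
      (continuous_const.integrable_of_hasCompactSupport (.of_compactSpace _))
      (.of_forall fun U t _ ↦ by simpa only [evalOrbit_mul] using hasDerivAt_V _ P t)).2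
  simp only [integral_evalOrbit_mul_left] at hasDerivAt_integral
  exact hasDerivAt_integral.unique (hasDerivAt_const _ _)

theorem orbitIntegral_conjDerivation (A Y : Matrix n n ℂ) (P : MvPolynomial (n × n) ℂ) :
    orbitIntegral m A (conjDerivation Y P) = 0 := by
  have of_isSelfAdjoint (H : selfAdjoint (Matrix n n ℂ)) :
      orbitIntegral m A (conjDerivation (H : Matrix n n ℂ) P) = 0 := by
    have := orbitIntegral_conjDerivation_of_mem_skewAdjoint m A
      (H.2.smul_mem_skewAdjoint Complex.conj_I) P
    simpa [conjDerivation_smul] using this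
  rw [← realPart_add_I_smul_imaginaryPart Y, conjDerivation_add, conjDerivation_smul]
  simp [of_isSelfAdjoint]

theorem isOrbitFunctional_orbitIntegral {N : ℕ} (m : Measure (unitaryGroup (Fin N) ℂ))
    [IsFiniteMeasureOnCompacts m] [m.IsMulLeftInvariant] (b : Fin N → ℂ) :
    IsOrbitFunctional b (orbitIntegral m (diagonal b)) where
  map_conjDerivation := orbitIntegral_conjDerivation m _
  map_trace_pow_mul k P := by
    simp [orbitIntegral_apply, evalOrbit_trace_pow, diagonal_pow, trace_diagonal,
      integral_const_mul]
  map_rename := orbitIntegral_rename m _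

end OrbitIntegral

section HarishChandraItzyksonZuber

open Matrix

variable {N : ℕ} (m : Measure (unitaryGroup (Fin N) ℂ))

theorem hasSum_orbitIntegral_linear_pow {n : Type*} [Fintype n] [DecidableEq n]
    (m : Measure (unitaryGroup n ℂ)) [IsFiniteMeasureOnCompacts m] (A : Matrix n n ℂ) (a : n → ℂ) :
    HasSum (fun k : ℕ ↦ orbitIntegral m A
        ((∑ i, MvPolynomial.C (a i) * MvPolynomial.X (i, i)) ^ k) / k.factorial)
      (∫ U : unitaryGroup n ℂ,
        Complex.exp (U * A * star (U : Matrix n n ℂ) * diagonal a).trace ∂m) := by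
  set Q : MvPolynomial (n × n) ℂ := ∑ i, MvPolynomial.C (a i) * MvPolynomial.X (i, i) with hQ
  have evalOrbit_Q (U : unitaryGroup n ℂ) :
      evalOrbit A U Q = (U * A * star (U : Matrix n n ℂ) * diagonal a).trace := by
    simp [hQ, evalOrbit, Unitary.conjStarAlgAut_apply, trace, mul_comm]
  obtain ⟨M, hM⟩ := exists_norm_evalOrbit_le A Q
  have pow_div_factorial_le (k : ℕ) (U) :
      ‖evalOrbit A U (Q ^ k) / k.factorial‖ ≤ M ^ k / k.factorial := by
    rw [norm_div, map_pow, norm_pow, Complex.norm_natCast]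
    gcongr
    exact hM U
  simp only [orbitIntegral_apply, ← integral_div]
  refine hasSum_integral_of_dominated_convergence (fun k _ ↦ M ^ k / k.factorial)
    (fun k ↦ ((integrable_evalOrbit m A (Q ^ k)).div_const _).aestronglyMeasurable)
    (fun k ↦ .of_forall (pow_div_factorial_le k))
    (.of_forall fun _ ↦ Real.summable_pow_div_factorial M)
    (continuous_const.integrable_of_hasCompactSupport (.of_compactSpace _)) (.of_forall fun U ↦ ?_)
  simpa only [map_pow, evalOrbit_Q, Complex.exp_eq_exp_ℂ] using
    NormedSpace.expSeries_div_hasSum_exp (evalOrbit A U Q)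

theorem integral_exp_trace_mul_prod_sub [m.IsMulLeftInvariant] [IsProbabilityMeasure m]
    (a b : Fin N → ℂ) :
    (∫ U : unitaryGroup (Fin N) ℂ,
        Complex.exp (U * diagonal b * star (U : Matrix (Fin N) (Fin N) ℂ) * diagonal a).trace ∂m) *
      (∏ t ∈ ltPairs N, (a t.2 - a t.1)) * ∏ t ∈ ltPairs N, (b t.2 - b t.1) =
      (∏ i : Fin N, ((i : ℕ).factorial : ℂ)) *
        (of fun i j ↦ Complex.exp (a i * b j)).det := by
  have orbitIntegral_one : orbitIntegral m (diagonal b) 1 = 1 := by simp [orbitIntegral_apply]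
  simpa only [orbitIntegral_one, mul_one] using
    (isOrbitFunctional_orbitIntegral m b).exp_mul_prod_sub (hasSum_orbitIntegral_linear_pow m _ a)

theorem ofReal_re_trace_mul_of_isHermitian {n : Type*} [Fintype n] {A B : Matrix n n ℂ}
    (hA : A.IsHermitian) (hB : B.IsHermitian) : ((A * B).trace.re : ℂ) = (A * B).trace := by
  rw [← Complex.conj_eq_iff_re, starRingEnd_apply, ← trace_conjTranspose, conjTranspose_mul, hA.eq,
    hB.eq, trace_mul_comm]

theorem ofReal_sphInt {C D : Matrix (Fin N) (Fin N) ℂ} (hC : C.IsHermitian) (hD : D.IsHermitian) :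
    (sphInt N m C D : ℂ) = ∫ U : unitaryGroup (Fin N) ℂ,
      Complex.exp (N * (U * C * star (U : Matrix (Fin N) (Fin N) ℂ) * D).trace) ∂m := by
  rw [sphInt, ← integral_complex_ofReal]
  congr with U
  rw [star_eq_conjTranspose, Complex.ofReal_exp, Complex.ofReal_mul, Complex.ofReal_natCast,
    ofReal_re_trace_mul_of_isHermitian (isHermitian_mul_mul_conjTranspose _ hC) hD]

theorem prod_prod_Ioi_sub_mul_prod_prod_Ioi_sub {R : Type*} [CommRing R] (a b : Fin N → R) :
    (∏ i, ∏ j ∈ Finset.Ioi i, (a i - a j)) * ∏ i, ∏ j ∈ Finset.Ioi i, (b i - b j) =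
      (∏ t ∈ ltPairs N, (a t.2 - a t.1)) * ∏ t ∈ ltPairs N, (b t.2 - b t.1) := by
  rw [← prod_ltPairs fun i j ↦ a i - a j, ← prod_ltPairs fun i j ↦ b i - b j,
    ← Finset.prod_mul_distrib, ← Finset.prod_mul_distrib]
  exact Finset.prod_congr rfl fun t _ ↦ by ring

theorem sphInt_diagonal_mul_prod_sub [m.IsMulLeftInvariant] [IsProbabilityMeasure m]
    (a b : Fin N → ℝ) :
    (N : ℝ) ^ (ltPairs N).card *
        sphInt N m (diagonal fun i ↦ (b i : ℂ)) (diagonal fun i ↦ (a i : ℂ)) *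
      (∏ i, ∏ j ∈ Finset.Ioi i, (a i - a j)) * (∏ i, ∏ j ∈ Finset.Ioi i, (b i - b j)) =
      (∏ i : Fin N, ((i : ℕ).factorial : ℝ)) * (of fun i j ↦ Real.exp (N * a i * b j)).det := by
  have isHermitian_diagonal (c : Fin N → ℝ) : (diagonal fun i ↦ (c i : ℂ)).IsHermitian :=
    isHermitian_diagonal_of_self_adjoint _ (by ext; simp)
  have det_ofReal : ((of fun i j ↦ Real.exp (N * a i * b j)).det : ℂ) =
      (of fun i j ↦ Complex.exp (N * a i * b j)).det := by
    rw [← Complex.ofRealHom_eq_coe, RingHom.map_det]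
    congr 1
    ext i j
    simp
  have scaled (U : unitaryGroup (Fin N) ℂ) (B : Matrix (Fin N) (Fin N) ℂ) :
      N * (U * B * star (U : Matrix (Fin N) (Fin N) ℂ) * diagonal fun i ↦ (a i : ℂ)).trace =
      (U * B * star (U : Matrix (Fin N) (Fin N) ℂ) * diagonal fun i ↦ (N * a i : ℂ)).trace := by
    simp [trace, Finset.mul_sum, mul_left_comm]
  rw [mul_assoc, prod_prod_Ioi_sub_mul_prod_prod_Ioi_sub]
  apply Complex.ofReal_injective
  push_cast
  rw [det_ofReal, ofReal_sphInt m (isHermitian_diagonal b) (isHermitian_diagonal a)]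
  simp only [scaled]
  rw [← integral_exp_trace_mul_prod_sub m (fun i ↦ (N * a i : ℂ)) fun i ↦ (b i : ℂ)]
  simp only [← mul_sub, Finset.prod_mul_distrib, Finset.prod_const]
  ring

theorem det_exp_natCast_mul_log {n : Type*} [Fintype n] [DecidableEq n] (l : n → ℕ) {x : n → ℝ}
    (hx : ∀ i, 0 < x i) :
    (of fun i j ↦ Real.exp (l i * Real.log (x j))).det = (of fun i j ↦ x i ^ l j).det := by
  rw [← det_transpose]
  congr 1
  ext i j
  simp [Real.exp_nat_mul, Real.exp_log (hx i)]

end HarishChandraItzyksonZuber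

/-- **Schur polynomials as spherical integrals.** For every `N` there is a constant
`c_N > 0` such that for every Young diagram `λ` with at most `N` rows (with
`l_i = λ_i + N - i`) and all pairwise distinct positive reals `m_1, …, m_N`,
`s_λ(m) = c_N · I_N(diag (log m), diag (l/N)) · ∏_{i<j} ((l_i - l_j)/N)
          · ∏_{i<j} (log m_i - log m_j) / ∏_{i<j} (m_i - m_j)`. -/
theorem schur_as_spherical_integral (N : ℕ) (hN : 0 < N)
    (m : Measure (Matrix.unitaryGroup (Fin N) ℂ))
    [m.IsHaarMeasure] [IsProbabilityMeasure m] :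
    ∃ cN : ℝ, 0 < cN ∧ ∀ (lam : Fin N → ℕ), Antitone lam → ∀ x : Fin N → ℝ,
      (∀ i, 0 < x i) → Function.Injective x →
      schur N lam x
        = cN * sphInt N m (Matrix.diagonal (fun i => (Real.log (x i) : ℂ)))
            (Matrix.diagonal
              (fun i => ((((lam i + (N - 1 - (i : ℕ)) : ℕ) : ℝ) / N : ℝ) : ℂ)))
          * (∏ i : Fin N, ∏ j ∈ Finset.Ioi i,
              ((((lam i + (N - 1 - (i : ℕ)) : ℕ) : ℝ)
                - ((lam j + (N - 1 - (j : ℕ)) : ℕ) : ℝ)) / N))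
          * (∏ i : Fin N, ∏ j ∈ Finset.Ioi i, (Real.log (x i) - Real.log (x j)))
          / (∏ i : Fin N, ∏ j ∈ Finset.Ioi i, (x i - x j)) := by
  refine ⟨(N : ℝ) ^ (ltPairs N).card / ∏ i : Fin N, ((i : ℕ).factorial : ℝ), by positivity,
    fun lam hlam x hx hinj ↦ ?_⟩
  have prod_sub_ne_zero : ∏ i, ∏ j ∈ Finset.Ioi i, (x i - x j) ≠ 0 :=
    Finset.prod_ne_zero_iff.2 fun i _ ↦ Finset.prod_ne_zero_iff.2 fun j hj ↦
      sub_ne_zero.2 (hinj.ne (Finset.mem_Ioi.1 hj).ne)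
  have prod_factorial_ne_zero : ∏ i : Fin N, ((i : ℕ).factorial : ℝ) ≠ 0 := by positivity
  have N_ne_zero : (N : ℝ) ≠ 0 := Nat.cast_ne_zero.2 hN.ne'
  let l (i : Fin N) : ℕ := lam i + (N - 1 - i)
  have hciz := sphInt_diagonal_mul_prod_sub m (fun i ↦ (l i / N : ℝ)) fun i ↦ Real.log (x i)
  simp only [mul_div_cancel₀ _ N_ne_zero, ← sub_div] at hciz
  rw [det_exp_natCast_mul_log l hx, ← schur_mul_prod_sub hlam] at hciz
  rw [eq_div_iff prod_sub_ne_zero]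
  field_simp
  linear_combination -hciz
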